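/- arXiv:1912.11192 — 4 statements merged into one kernel-verified Lean document; each statement's English description precedes it below -/
import Mathlib

section
/- Let r ≥ 0 and 0 ≤ s₁ < 3/2 + r < s₂. There exists a constant c > 0 depending only on s₁, s₂ and r such that for every a : ℤ³ ∖ {0} → ℂ with ‖a‖_{s₁} < ∞ and ‖a‖_{s₂} < ∞, one has ∑_{k ∈ ℤ³, k ≠ 0} |k|^r |a_k| ≤ c · ‖a‖_{s₁}^((s₂ − r − 3/2)/(s₂ − s₁)) · ‖a‖_{s₂}^((3/2 + r − s₁)/(s₂ − s₁)). -/
open scoped BigOperators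

/-- Euclidean norm of a lattice point `k ∈ ℤ³`. -/
noncomputable def wt (k : Fin 3 → ℤ) : ℝ := Real.sqrt (∑ i, ((k i : ℝ)) ^ 2)

/-- Summand of the squared Sobolev–Gevrey norm: `|k|^{2s} e^{2α|k|} |a_k|²`. -/
noncomputable def gterm (s α : ℝ) (a : (Fin 3 → ℤ) → ℂ) (k : Fin 3 → ℤ) : ℝ :=
  wt k ^ (2 * s) * Real.exp (2 * α * wt k) * ‖a k‖ ^ 2

/-- Sobolev–Gevrey norm `‖a‖_{s,α}`, the sum ranging over `k ∈ ℤ³ ∖ {0}`. -/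
noncomputable def gnorm (s α : ℝ) (a : (Fin 3 → ℤ) → ℂ) : ℝ :=
  Real.sqrt (∑' k : {k : Fin 3 → ℤ // k ≠ 0}, gterm s α a k.1)

/-!
Decompose the frequencies into dyadic shells `κ 2 ^ j ≤ |k| < κ 2 ^ (j + 1)`, `j ∈ ℤ`. A shell of
radius `R` holds `O(R ^ d)` lattice points, `d = 3`, so Cauchy–Schwarz bounds its contribution by
`R ^ (d / 2 + r - s) ‖a‖_s` for `s = s₁` and for `s = s₂`. The first exponent is positive and the
second negative; choosing `κ` so that the two bounds agree at `j = 0`, where they are the product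
of powers of the norms in the estimate, makes the better of the two decay geometrically in `|j|`.
Replacing `a_k` by `e ^ (α |k|) a_k` gives the Gevrey version with a constant independent of `α`.
-/

open Finset

section DyadicSums

theorem summable_pow_natAbs {x : ℝ} (h₀ : 0 ≤ x) (h₁ : x < 1) :
    Summable fun j : ℤ => x ^ j.natAbs := by
  have hgeom : Summable fun n : ℕ => x ^ n := summable_geometric_of_lt_one h₀ h₁
  exact .of_nat_of_neg (by simpa using hgeom) (by simpa using hgeom)

theorem min_rpow_zpow_le_pow_natAbs {b u v : ℝ} (hb : 1 ≤ b) (j : ℤ) :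
    min ((b ^ j) ^ u) ((b ^ j) ^ (-v)) ≤ (b ^ (-min u v)) ^ j.natAbs := by
  have hb₀ : 0 ≤ b := zero_le_one.trans hb
  obtain ⟨n, rfl | rfl⟩ := j.eq_nat_or_neg
  · calc min ((b ^ (n : ℤ)) ^ u) ((b ^ (n : ℤ)) ^ (-v)) ≤ (b ^ (n : ℤ)) ^ (-v) := min_le_right _ _
      _ = (b ^ (-v)) ^ n := by rw [zpow_natCast, ← Real.rpow_pow_comm hb₀]
      _ ≤ (b ^ (-min u v)) ^ n := by gcongr; exact min_le_right u v
      _ = _ := by rw [Int.natAbs_natCast]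
  · calc min ((b ^ (-n : ℤ)) ^ u) ((b ^ (-n : ℤ)) ^ (-v)) ≤ (b ^ (-n : ℤ)) ^ u := min_le_left _ _
      _ = (b ^ (-u)) ^ n := by
        rw [zpow_neg, zpow_natCast, Real.inv_rpow (by positivity), ← Real.rpow_pow_comm hb₀,
          ← inv_pow, Real.rpow_neg hb₀]
      _ ≤ (b ^ (-min u v)) ^ n := by gcongr; exact min_le_left u v
      _ = _ := by rw [Int.natAbs_neg, Int.natAbs_natCast]

theorem exists_zpow_two_shell {κ t : ℝ} (hκ : 0 < κ) (ht : 0 < t) :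
    ∃ j : ℤ, κ * 2 ^ j ≤ t ∧ t ≤ 2 * (κ * 2 ^ j) := by
  obtain ⟨j, hj, hj'⟩ := exists_mem_Ico_zpow (div_pos ht hκ) one_lt_two
  rw [le_div_iff₀' hκ] at hj
  rw [div_lt_iff₀' hκ, zpow_add_one₀ two_ne_zero] at hj'
  exact ⟨j, hj, by linarith⟩

theorem sum_le_tsum_of_sum_fiber_le {ι κ : Type*} [DecidableEq κ] {g : ι → ℝ} {B : κ → ℝ}
    (F : Finset ι) (J : ι → κ) (hB : Summable B) (hB₀ : ∀ j, 0 ≤ B j)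
    (h : ∀ j, ∑ i ∈ F with J i = j, g i ≤ B j) : ∑ i ∈ F, g i ≤ ∑' j, B j :=
  calc ∑ i ∈ F, g i = ∑ j ∈ F.image J, ∑ i ∈ F with J i = j, g i :=
        (sum_fiberwise_of_maps_to (fun _ => mem_image_of_mem J) g).symm
    _ ≤ ∑ j ∈ F.image J, B j := sum_le_sum fun j _ => h j
    _ ≤ ∑' j, B j := hB.sum_le_tsum _ fun j _ => hB₀ j

end DyadicSums

section RealPowers

theorem rpow_le_two_rpow_abs_mul_rpow {R t : ℝ} (hR : 0 < R) (h₁ : R ≤ t) (h₂ : t ≤ 2 * R)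
    (e : ℝ) : t ^ e ≤ 2 ^ |e| * R ^ e := by
  rcases le_total 0 e with he | he
  · calc t ^ e ≤ (2 * R) ^ e := Real.rpow_le_rpow (hR.le.trans h₁) h₂ he
      _ = 2 ^ |e| * R ^ e := by rw [Real.mul_rpow zero_le_two hR.le, abs_of_nonneg he]
  · calc t ^ e ≤ R ^ e := Real.rpow_le_rpow_of_nonpos hR h₁ he
      _ ≤ 2 ^ |e| * R ^ e :=
        le_mul_of_one_le_left (by positivity) (Real.one_le_rpow one_le_two (abs_nonneg e))

theorem exists_pos_rpow_mul_eq {A₁ A₂ u v : ℝ} (hA₁ : 0 < A₁) (hA₂ : 0 < A₂) (huv : u + v ≠ 0) :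
    ∃ κ : ℝ, 0 < κ ∧
      κ ^ u * A₁ = A₁ ^ (v / (u + v)) * A₂ ^ (u / (u + v)) ∧
      κ ^ (-v) * A₂ = A₁ ^ (v / (u + v)) * A₂ ^ (u / (u + v)) := by
  have hpow (x : ℝ) : ((A₂ / A₁) ^ (1 / (u + v))) ^ x
      = A₂ ^ (x / (u + v)) / A₁ ^ (x / (u + v)) := by
    rw [← Real.rpow_mul (by positivity), one_div_mul_eq_div, Real.div_rpow hA₂.le hA₁.le]
  have hu : u / (u + v) = 1 - v / (u + v) := by field_simp; ring
  refine ⟨(A₂ / A₁) ^ (1 / (u + v)), by positivity, ?_, ?_⟩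
  · rw [hpow, hu, Real.rpow_sub hA₁, Real.rpow_one]
    field_simp
  · rw [hpow, hu, neg_div, Real.rpow_sub hA₂, Real.rpow_neg hA₂.le, Real.rpow_neg hA₁.le,
      Real.rpow_one]
    field_simp

end RealPowers

section Interpolation

variable {ι : Type*} {w f : ι → ℝ} {M d r s s₁ s₂ : ℝ}

/-- The weight `w` has polynomial growth of order `d` with constant `M`: at most `M R ^ d` indices
have weight at most `R`. Quantifying over finsets makes finiteness of the sublevel sets part of the
condition. -/
def HasGrowthBound (w : ι → ℝ) (M d : ℝ) : Prop :=
  ∀ (F : Finset ι) (R : ℝ), 0 < R → (∀ i ∈ F, w i ≤ R) → (#F : ℝ) ≤ M * R ^ d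

/-- The `ℓ²` norm of `f` with weight `w ^ s`, an abstract Sobolev norm of order `s`. It is the junk
value `0` if the sum of squares diverges. -/
noncomputable def weightedNorm (w : ι → ℝ) (s : ℝ) (f : ι → ℝ) : ℝ :=
  √(∑' i, w i ^ (2 * s) * f i ^ 2)

theorem weightedNorm_nonneg : 0 ≤ weightedNorm w s f := Real.sqrt_nonneg _

theorem weightedNorm_term_nonneg (hw : ∀ i, 0 < w i) (i : ι) : 0 ≤ w i ^ (2 * s) * f i ^ 2 := by
  have := hw i
  positivity

theorem weightedNorm_pos (hw : ∀ i, 0 < w i) (hs : Summable fun i => w i ^ (2 * s) * f i ^ 2)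
    {i : ι} (hi : f i ≠ 0) : 0 < weightedNorm w s f := by
  have := hw i
  exact Real.sqrt_pos.mpr (hs.tsum_pos (weightedNorm_term_nonneg hw) i (by positivity))

theorem sqrt_sum_le_weightedNorm (hw : ∀ i, 0 < w i)
    (hs : Summable fun i => w i ^ (2 * s) * f i ^ 2) (F : Finset ι) :
    √(∑ i ∈ F, w i ^ (2 * s) * f i ^ 2) ≤ weightedNorm w s f :=
  Real.sqrt_le_sqrt (hs.sum_le_tsum F fun i _ => weightedNorm_term_nonneg hw i)

theorem HasGrowthBound.sum_shell_le (hM : HasGrowthBound w M d) {F : Finset ι} {R : ℝ}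
    (hR : 0 < R) (hF : ∀ i ∈ F, R ≤ w i ∧ w i ≤ 2 * R) (r s : ℝ) :
    ∑ i ∈ F, w i ^ r * f i ≤ √(M * 2 ^ d) * 2 ^ |r - s| *
      (R ^ (d / 2 + r - s) * √(∑ i ∈ F, w i ^ (2 * s) * f i ^ 2)) := by
  have hpos : ∀ i ∈ F, 0 < w i := fun i hi => hR.trans_le (hF i hi).1
  have hcard : (#F : ℝ) ≤ M * (2 * R) ^ d := hM F (2 * R) (by positivity) fun i hi => (hF i hi).2
  have hweight : ∑ i ∈ F, (w i ^ (r - s)) ^ 2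
      ≤ M * (2 * R) ^ d * (2 ^ |r - s| * R ^ (r - s)) ^ 2 :=
    calc ∑ i ∈ F, (w i ^ (r - s)) ^ 2 ≤ ∑ _i ∈ F, (2 ^ |r - s| * R ^ (r - s)) ^ 2 := by
          refine sum_le_sum fun i hi => pow_le_pow_left₀ (Real.rpow_nonneg (hpos i hi).le _) ?_ 2
          exact rpow_le_two_rpow_abs_mul_rpow hR (hF i hi).1 (hF i hi).2 _
      _ = #F * (2 ^ |r - s| * R ^ (r - s)) ^ 2 := by rw [sum_const, nsmul_eq_mul]
      _ ≤ _ := by gcongr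
  calc ∑ i ∈ F, w i ^ r * f i = ∑ i ∈ F, w i ^ (r - s) * (w i ^ s * f i) := by
        refine sum_congr rfl fun i hi => ?_
        rw [← mul_assoc, ← Real.rpow_add (hpos i hi), sub_add_cancel]
    _ ≤ √(∑ i ∈ F, (w i ^ (r - s)) ^ 2) * √(∑ i ∈ F, (w i ^ s * f i) ^ 2) :=
        Real.sum_mul_le_sqrt_mul_sqrt F _ _
    _ = √(∑ i ∈ F, (w i ^ (r - s)) ^ 2) * √(∑ i ∈ F, w i ^ (2 * s) * f i ^ 2) := by
        congr 2
        refine sum_congr rfl fun i hi => ?_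
        rw [mul_pow, ← Real.rpow_mul_natCast (hpos i hi).le, Nat.cast_ofNat, mul_comm s]
    _ ≤ √(M * (2 * R) ^ d * (2 ^ |r - s| * R ^ (r - s)) ^ 2) *
          √(∑ i ∈ F, w i ^ (2 * s) * f i ^ 2) := by gcongr
    _ = _ := by
        rw [Real.sqrt_mul' _ (sq_nonneg _), Real.sqrt_sq (by positivity),
          Real.mul_rpow zero_le_two hR.le, ← mul_assoc M, Real.sqrt_mul' _ (by positivity),
          Real.sqrt_eq_rpow (R ^ d), ← Real.rpow_mul hR.le, add_sub_assoc, Real.rpow_add hR,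
          mul_one_div]
        ring

theorem HasGrowthBound.sum_dyadic_shell_le (hM : HasGrowthBound w M d) {F : Finset ι} {κ : ℝ}
    (hκ : 0 < κ) {j : ℤ} (hF : ∀ i ∈ F, κ * 2 ^ j ≤ w i ∧ w i ≤ 2 * (κ * 2 ^ j)) (r s₁ s₂ : ℝ)
    {N : ℝ}
    (h₁ : κ ^ (d / 2 + r - s₁) * √(∑ i ∈ F, w i ^ (2 * s₁) * f i ^ 2) ≤ N)
    (h₂ : κ ^ (d / 2 + r - s₂) * √(∑ i ∈ F, w i ^ (2 * s₂) * f i ^ 2) ≤ N) :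
    ∑ i ∈ F, w i ^ r * f i ≤ √(M * 2 ^ d) * (2 ^ |r - s₁| + 2 ^ |r - s₂|) * N *
      (2 ^ (-min (d / 2 + r - s₁) (s₂ - r - d / 2))) ^ j.natAbs := by
  have hN : 0 ≤ N := le_trans (by positivity) h₁
  have hshell {s : ℝ}
      (h : κ ^ (d / 2 + r - s) * √(∑ i ∈ F, w i ^ (2 * s) * f i ^ 2) ≤ N)
      (hs : (2 : ℝ) ^ |r - s| ≤ 2 ^ |r - s₁| + 2 ^ |r - s₂|) :
      ∑ i ∈ F, w i ^ r * f i ≤ √(M * 2 ^ d) * (2 ^ |r - s₁| + 2 ^ |r - s₂|) * N *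
        (2 ^ j) ^ (d / 2 + r - s) :=
    calc ∑ i ∈ F, w i ^ r * f i ≤ √(M * 2 ^ d) * 2 ^ |r - s| *
          ((κ * 2 ^ j) ^ (d / 2 + r - s) * √(∑ i ∈ F, w i ^ (2 * s) * f i ^ 2)) :=
          hM.sum_shell_le (by positivity) hF r s
      _ = √(M * 2 ^ d) * 2 ^ |r - s| * (κ ^ (d / 2 + r - s) *
          √(∑ i ∈ F, w i ^ (2 * s) * f i ^ 2)) * (2 ^ j) ^ (d / 2 + r - s) := by
          rw [Real.mul_rpow hκ.le (by positivity)]; ring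
      _ ≤ _ := by gcongr
  have hmin := le_min (hshell h₁ (le_add_of_nonneg_right (by positivity)))
    (hshell h₂ (le_add_of_nonneg_left (by positivity)))
  rw [← mul_min_of_nonneg _ _ (by positivity)] at hmin
  refine hmin.trans (mul_le_mul_of_nonneg_left ?_ (by positivity))
  rw [show d / 2 + r - s₂ = -(s₂ - r - d / 2) by ring]
  exact min_rpow_zpow_le_pow_natAbs one_le_two j

theorem HasGrowthBound.exists_sum_rpow_mul_le (hM : HasGrowthBound w M d) (hM₀ : 0 < M)
    (hw : ∀ i, 0 < w i) (h₁ : s₁ < d / 2 + r) (h₂ : d / 2 + r < s₂) :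
    ∃ c : ℝ, 0 < c ∧ ∀ (F : Finset ι) (f : ι → ℝ) (A₁ A₂ : ℝ), 0 < A₁ → 0 < A₂ →
      √(∑ i ∈ F, w i ^ (2 * s₁) * f i ^ 2) ≤ A₁ → √(∑ i ∈ F, w i ^ (2 * s₂) * f i ^ 2) ≤ A₂ →
      ∑ i ∈ F, w i ^ r * f i ≤
        c * A₁ ^ ((s₂ - r - d / 2) / (s₂ - s₁)) * A₂ ^ ((d / 2 + r - s₁) / (s₂ - s₁)) := by
  have hu : 0 < d / 2 + r - s₁ := sub_pos.mpr h₁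
  have hv : 0 < s₂ - r - d / 2 := by linarith
  set u := d / 2 + r - s₁
  set v := s₂ - r - d / 2
  have huv : s₂ - s₁ = u + v := by ring
  set x : ℝ := 2 ^ (-min u v)
  have hx₀ : 0 ≤ x := by positivity
  have hx : Summable fun j : ℤ => x ^ j.natAbs :=
    summable_pow_natAbs hx₀
      (Real.rpow_lt_one_of_one_lt_of_neg one_lt_two (neg_lt_zero.mpr (lt_min hu hv)))
  set K := √(M * 2 ^ d) * (2 ^ |r - s₁| + 2 ^ |r - s₂|)
  refine ⟨K * ∑' j : ℤ, x ^ j.natAbs, mul_pos (by positivity)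
    (hx.tsum_pos (fun j => by positivity) 0 (by simp)), fun F f A₁ A₂ hA₁ hA₂ hF₁ hF₂ => ?_⟩
  obtain ⟨κ, hκ, hκ₁, hκ₂⟩ := exists_pos_rpow_mul_eq hA₁ hA₂ (add_pos hu hv).ne'
  rw [huv]
  set N := A₁ ^ (v / (u + v)) * A₂ ^ (u / (u + v)) with hN
  have : 0 ≤ N := by positivity
  choose J hJ using fun i => exists_zpow_two_shell hκ (hw i)
  have hfilter (j : ℤ) (s : ℝ) : √(∑ i ∈ F with J i = j, w i ^ (2 * s) * f i ^ 2)
      ≤ √(∑ i ∈ F, w i ^ (2 * s) * f i ^ 2) :=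
    Real.sqrt_le_sqrt (sum_le_sum_of_subset_of_nonneg (filter_subset _ _) fun i _ _ =>
      weightedNorm_term_nonneg hw i)
  calc ∑ i ∈ F, w i ^ r * f i ≤ ∑' j : ℤ, K * N * x ^ j.natAbs := by
        refine sum_le_tsum_of_sum_fiber_le F J (hx.mul_left _) (fun j => by positivity) fun j => ?_
        refine hM.sum_dyadic_shell_le hκ (fun i hi => (mem_filter.mp hi).2 ▸ hJ i) r s₁ s₂ ?_ ?_
        · rw [← hκ₁]
          gcongr
          exact (hfilter j s₁).trans hF₁
        · rw [← hκ₂, show -v = d / 2 + r - s₂ by ring]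
          gcongr
          exact (hfilter j s₂).trans hF₂
    _ = _ := by rw [tsum_mul_left, hN]; ring

theorem HasGrowthBound.exists_tsum_rpow_mul_le (hM : HasGrowthBound w M d) (hM₀ : 0 < M)
    (hw : ∀ i, 0 < w i) (h₁ : s₁ < d / 2 + r) (h₂ : d / 2 + r < s₂) :
    ∃ c : ℝ, 0 < c ∧ ∀ f : ι → ℝ, (∀ i, 0 ≤ f i) →
      Summable (fun i => w i ^ (2 * s₁) * f i ^ 2) →
      Summable (fun i => w i ^ (2 * s₂) * f i ^ 2) →
      Summable (fun i => w i ^ r * f i) ∧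
      ∑' i, w i ^ r * f i ≤ c * weightedNorm w s₁ f ^ ((s₂ - r - d / 2) / (s₂ - s₁)) *
        weightedNorm w s₂ f ^ ((d / 2 + r - s₁) / (s₂ - s₁)) := by
  obtain ⟨c, hc, hsum⟩ := hM.exists_sum_rpow_mul_le hM₀ hw h₁ h₂
  refine ⟨c, hc, fun f hf hs₁ hs₂ => ?_⟩
  have hterm : ∀ i, 0 ≤ w i ^ r * f i := fun i => mul_nonneg (Real.rpow_nonneg (hw i).le r) (hf i)
  have hbound (F : Finset ι) : ∑ i ∈ F, w i ^ r * f i ≤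
      c * weightedNorm w s₁ f ^ ((s₂ - r - d / 2) / (s₂ - s₁)) *
        weightedNorm w s₂ f ^ ((d / 2 + r - s₁) / (s₂ - s₁)) := by
    by_cases hzero : ∀ i, f i = 0
    · have := weightedNorm_nonneg (w := w) (s := s₁) (f := f)
      have := weightedNorm_nonneg (w := w) (s := s₂) (f := f)
      simp only [hzero, mul_zero, sum_const_zero]
      positivity
    · obtain ⟨i, hi⟩ := not_forall.mp hzero
      exact hsum F f _ _ (weightedNorm_pos hw hs₁ hi) (weightedNorm_pos hw hs₂ hi)
        (sqrt_sum_le_weightedNorm hw hs₁ F) (sqrt_sum_le_weightedNorm hw hs₂ F)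
  exact ⟨summable_of_sum_le hterm hbound, Real.tsum_le_of_sum_le hterm hbound⟩

end Interpolation

section Lattice

theorem card_le_of_forall_norm_le {n : Type*} [Fintype n] {F : Finset (n → ℤ)} {R : ℝ}
    (hR : 0 ≤ R) (hF : ∀ k ∈ F, ‖k‖ ≤ R) : (#F : ℝ) ≤ (2 * R + 1) ^ Fintype.card n := by
  classical
  have hsub : F ⊆ Fintype.piFinset fun _ => Icc (-⌊R⌋) ⌊R⌋ := fun k hk => by
    refine Fintype.mem_piFinset.mpr fun i => mem_Icc.mpr (abs_le.mp (Int.le_floor.mpr ?_))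
    rw [Int.cast_abs, ← Int.norm_eq_abs]
    exact (norm_le_pi_norm k i).trans (hF k hk)
  have hcube : ((#(Icc (-⌊R⌋) ⌊R⌋) : ℕ) : ℝ) ≤ 2 * R + 1 := by
    have hfloor : 0 ≤ ⌊R⌋ := Int.floor_nonneg.mpr hR
    have hcard : ((#(Icc (-⌊R⌋) ⌊R⌋) : ℕ) : ℤ) = 2 * ⌊R⌋ + 1 := by
      rw [Int.card_Icc]; omega
    have : ((#(Icc (-⌊R⌋) ⌊R⌋) : ℕ) : ℝ) = 2 * (⌊R⌋ : ℝ) + 1 := by exact_mod_cast hcard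
    linarith [Int.floor_le R]
  calc (#F : ℝ) ≤ (#(Icc (-⌊R⌋) ⌊R⌋) : ℝ) ^ Fintype.card n := by
        have := card_le_card hsub
        rw [Fintype.card_piFinset, prod_const, card_univ] at this
        exact_mod_cast this
    _ ≤ (2 * R + 1) ^ Fintype.card n := by gcongr

theorem norm_le_wt (k : Fin 3 → ℤ) : ‖k‖ ≤ wt k := by
  refine (pi_norm_le_iff_of_nonneg (Real.sqrt_nonneg _)).mpr fun i => ?_
  rw [Int.norm_eq_abs]
  exact Real.abs_le_sqrt (single_le_sum (f := fun i => (k i : ℝ) ^ 2)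
    (fun _ _ => sq_nonneg _) (mem_univ i))

theorem one_le_wt {k : Fin 3 → ℤ} (hk : k ≠ 0) : 1 ≤ wt k := by
  obtain ⟨i, hi⟩ := Function.ne_iff.mp hk
  calc (1 : ℝ) ≤ ‖k i‖ := by
        rw [Int.norm_eq_abs]; exact_mod_cast Int.one_le_abs hi
    _ ≤ ‖k‖ := norm_le_pi_norm k i
    _ ≤ wt k := norm_le_wt k

theorem hasGrowthBound_wt : HasGrowthBound (fun k : {k : Fin 3 → ℤ // k ≠ 0} => wt k.1) 27 3 := by
  intro F R hR hF
  rcases F.eq_empty_or_nonempty with rfl | ⟨k₀, hk₀⟩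
  · rw [card_empty, Nat.cast_zero]
    positivity
  · have hR₁ : 1 ≤ R := (one_le_wt k₀.2).trans (hF k₀ hk₀)
    have hnorm : ∀ k ∈ F.map (.subtype _), ‖k‖ ≤ R := by
      simp only [mem_map, Function.Embedding.subtype_apply, forall_exists_index, and_imp]
      rintro _ k hk rfl
      exact (norm_le_wt k).trans (hF k hk)
    calc (#F : ℝ) ≤ (2 * R + 1) ^ 3 := by
          simpa only [card_map, Fintype.card_fin] using card_le_of_forall_norm_le hR.le hnorm
      _ ≤ (3 * R) ^ 3 := by gcongr; linarith
      _ = 27 * R ^ (3 : ℝ) := by rw [Real.rpow_ofNat]; ring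

theorem gterm_eq (s α : ℝ) (a : (Fin 3 → ℤ) → ℂ) (k : Fin 3 → ℤ) :
    gterm s α a k = wt k ^ (2 * s) * (Real.exp (α * wt k) * ‖a k‖) ^ 2 := by
  rw [gterm, mul_pow, ← Real.exp_nat_mul, Nat.cast_ofNat, ← mul_assoc 2, ← mul_assoc]

theorem gnorm_eq_weightedNorm (s α : ℝ) (a : (Fin 3 → ℤ) → ℂ) :
    gnorm s α a = weightedNorm (fun k : {k : Fin 3 → ℤ // k ≠ 0} => wt k.1) s
      fun k => Real.exp (α * wt k.1) * ‖a k.1‖ := by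
  simp only [gnorm, weightedNorm, gterm_eq]

end Lattice

theorem stmt1_general (r s₁ s₂ : ℝ) (h₁ : s₁ < 3 / 2 + r) (h₂ : 3 / 2 + r < s₂) :
    ∃ c : ℝ, 0 < c ∧ ∀ (α : ℝ) (a : (Fin 3 → ℤ) → ℂ),
      Summable (fun k : {k : Fin 3 → ℤ // k ≠ 0} => gterm s₁ α a k.1) →
      Summable (fun k : {k : Fin 3 → ℤ // k ≠ 0} => gterm s₂ α a k.1) →
      Summable (fun k : {k : Fin 3 → ℤ // k ≠ 0} =>
        wt k.1 ^ r * (Real.exp (α * wt k.1) * ‖a k.1‖)) ∧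
      (∑' k : {k : Fin 3 → ℤ // k ≠ 0}, wt k.1 ^ r * (Real.exp (α * wt k.1) * ‖a k.1‖)) ≤
        c * gnorm s₁ α a ^ ((s₂ - r - 3 / 2) / (s₂ - s₁))
          * gnorm s₂ α a ^ ((3 / 2 + r - s₁) / (s₂ - s₁)) := by
  obtain ⟨c, hc, hbound⟩ := hasGrowthBound_wt.exists_tsum_rpow_mul_le (by norm_num)
    (fun k => one_pos.trans_le (one_le_wt k.2)) h₁ h₂
  refine ⟨c, hc, fun α a => ?_⟩
  simp only [gterm_eq, gnorm_eq_weightedNorm]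
  exact hbound (fun k => Real.exp (α * wt k.1) * ‖a k.1‖) fun k => by positivity

/-- interpolation estimate
`∑_{k≠0} |k|^r |a_k| ≤ c ‖a‖_{s₁}^{(s₂−r−3/2)/(s₂−s₁)} ‖a‖_{s₂}^{(3/2+r−s₁)/(s₂−s₁)}`
for `0 ≤ s₁ < 3/2 + r < s₂`. -/
theorem stmt1 (r s₁ s₂ : ℝ) (hr : 0 ≤ r) (h1 : 0 ≤ s₁) (h2 : s₁ < 3 / 2 + r)
    (h3 : 3 / 2 + r < s₂) :
    ∃ c : ℝ, 0 < c ∧ ∀ a : (Fin 3 → ℤ) → ℂ,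
      Summable (fun k : {k : Fin 3 → ℤ // k ≠ 0} => gterm s₁ 0 a k.1) →
      Summable (fun k : {k : Fin 3 → ℤ // k ≠ 0} => gterm s₂ 0 a k.1) →
      Summable (fun k : {k : Fin 3 → ℤ // k ≠ 0} => wt k.1 ^ r * ‖a k.1‖) ∧
      (∑' k : {k : Fin 3 → ℤ // k ≠ 0}, wt k.1 ^ r * ‖a k.1‖) ≤
        c * gnorm s₁ 0 a ^ ((s₂ - r - 3 / 2) / (s₂ - s₁))
          * gnorm s₂ 0 a ^ ((3 / 2 + r - s₁) / (s₂ - s₁)) := by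
  obtain ⟨c, hc, hbound⟩ := stmt1_general r s₁ s₂ h2 h3
  exact ⟨c, hc, fun a => by simpa only [zero_mul, Real.exp_zero, one_mul] using hbound 0 a⟩
end

section
/- Let s₁ < 3/2, s₂ < 3/2 with s₁ + s₂ > 0. There exists a constant C > 0 depending only on s₁ and s₂ such that for all a, b : ℤ³ ∖ {0} → ℂ with ‖a‖_{s₁} < ∞ and ‖b‖_{s₂} < ∞, the convolution (a∗b)_k = ∑_{j ∈ ℤ³, j ≠ 0, j ≠ k} a_j b_{k−j} satisfies ‖a∗b‖_{s₁+s₂−3/2} ≤ C · ‖a‖_{s₁} · ‖b‖_{s₂}. -/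
open scoped BigOperators

/-- Convolution `(a∗b)_k = ∑_{j ≠ 0, j ≠ k} a_j b_{k−j}`. -/
noncomputable def convSeq (a b : (Fin 3 → ℤ) → ℂ) (k : Fin 3 → ℤ) : ℂ :=
  ∑' j : {j : Fin 3 → ℤ // j ≠ 0 ∧ j ≠ k}, a j.1 * b (k - j.1)

open scoped NNReal ENNReal

/-!
Put `s₃ = d / 2 - s₁ - s₂` with `d = 3`, and let `j`, `l = k - j` and `k` be the three frequencies
in a term of the convolution. By the triangle inequality the two largest of `|j|`, `|l|`, `|k|`
agree up to a factor `2`, so `|j| ^ (-s₁) |l| ^ (-s₂) |k| ^ (-s₃)` is at most a constant times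
`x ^ (-s) y ^ (s - d / 2)`, where `x` is the smallest of the three, `s` is its exponent and `y` is
one of the other two. As `s < d / 2`, summing over dyadic shells gives
`∑_{0 < |j| ≤ R} |j| ^ (-2 s) ≤ D R ^ (d - 2 s)`: this kernel is bounded in `ℓ²` in its smaller
variable, uniformly in the other one. Cauchy–Schwarz in `j` concludes: it separates the kernel from
the product of the two sequences when `j` or `l` is smallest, and keeps it with the first sequence
when `k` is smallest.

Only the number of points in balls enters, so the index group may be any normed group of polynomial
growth of degree `d`. A Gevrey weight costs nothing, since `e ^ (α |k|)` is submultiplicative.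
-/

section Kernel

variable {ι : Type*}

lemma ennreal_rpow_sq (x : ℝ≥0∞) (p : ℝ) : (x ^ p) ^ 2 = x ^ (2 * p) := by
  rw [← ENNReal.rpow_natCast, ← ENNReal.rpow_mul, mul_comm]; norm_num

lemma tsum_mul_sq_le (f g : ι → ℝ≥0∞) :
    (∑' i, f i * g i) ^ 2 ≤ (∑' i, f i ^ 2) * ∑' i, g i ^ 2 := by
  let _ : MeasurableSpace ι := ⊤
  have holder := ENNReal.lintegral_mul_le_Lp_mul_Lq (MeasureTheory.Measure.count (α := ι))
    Real.HolderConjugate.two_two (f := f) (g := g) measurable_from_top.aemeasurable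
    measurable_from_top.aemeasurable
  simp only [MeasureTheory.lintegral_count, Pi.mul_apply, ENNReal.rpow_ofNat] at holder
  calc (∑' i, f i * g i) ^ 2
      ≤ ((∑' i, f i ^ 2) ^ (1 / 2 : ℝ) * (∑' i, g i ^ 2) ^ (1 / 2 : ℝ)) ^ 2 := by gcongr
    _ = (∑' i, f i ^ 2) * ∑' i, g i ^ 2 := by
        rw [mul_pow, ennreal_rpow_sq, ennreal_rpow_sq]; norm_num

lemma add_add_sq_le_three_mul (x y z : ℝ≥0∞) :
    (x + y + z) ^ 2 ≤ 3 * (x ^ 2 + y ^ 2 + z ^ 2) := by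
  have hexp : (2 - 1 : ℝ) = 1 := by norm_num
  simpa [Fin.sum_univ_three, hexp] using
    ENNReal.rpow_sum_le_const_mul_sum_rpow Finset.univ ![x, y, z] one_le_two

variable {G : Type*} [AddCommGroup G] {K : G → G → ℝ≥0∞} {D : ℝ≥0∞}

/-- The convolution of `f` and `g` weighted by the kernel `K`, the first argument of `K` being the
point of evaluation. It isolates the bilinear operators to which the convolution estimate
reduces. -/
noncomputable def kernelConv (K : G → G → ℝ≥0∞) (f g : G → ℝ≥0∞) (k : G) : ℝ≥0∞ :=
  ∑' j, K k j * (f j * g (k - j))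

lemma tsum_kernelConv_sq_le_of_row (hK : ∀ k, ∑' j, K k j ^ 2 ≤ D) (f g : G → ℝ≥0∞) :
    ∑' k, kernelConv K f g k ^ 2 ≤ D * ((∑' j, f j ^ 2) * ∑' j, g j ^ 2) :=
  calc ∑' k, kernelConv K f g k ^ 2
      ≤ ∑' k, D * ∑' j, (f j * g (k - j)) ^ 2 :=
        ENNReal.tsum_le_tsum fun k => (tsum_mul_sq_le _ _).trans (by gcongr; exact hK k)
    _ = D * ∑' j, f j ^ 2 * ∑' k, g (k - j) ^ 2 := by
        simp_rw [ENNReal.tsum_mul_left, mul_pow]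
        rw [ENNReal.tsum_comm]
        simp_rw [ENNReal.tsum_mul_left]
    _ = D * ((∑' j, f j ^ 2) * ∑' j, g j ^ 2) := by
        have shift (j : G) : ∑' k, g (k - j) ^ 2 = ∑' l, g l ^ 2 :=
          (Equiv.subRight j).tsum_eq fun l => g l ^ 2
        simp_rw [shift, ENNReal.tsum_mul_right]

lemma tsum_kernelConv_sq_le_of_col (hK : ∀ j, ∑' k, K k j ^ 2 ≤ D) (f g : G → ℝ≥0∞) :
    ∑' k, kernelConv K f g k ^ 2 ≤ D * ((∑' j, f j ^ 2) * ∑' j, g j ^ 2) :=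
  calc ∑' k, kernelConv K f g k ^ 2
      = ∑' k, (∑' j, (K k j * f j) * g (k - j)) ^ 2 := by simp only [kernelConv, mul_assoc]
    _ ≤ ∑' k, (∑' j, (K k j * f j) ^ 2) * ∑' j, g (k - j) ^ 2 :=
        ENNReal.tsum_le_tsum fun k => tsum_mul_sq_le _ _
    _ = (∑' j, (∑' k, K k j ^ 2) * f j ^ 2) * ∑' j, g j ^ 2 := by
        have reflect (k : G) : ∑' j, g (k - j) ^ 2 = ∑' l, g l ^ 2 :=
          (Equiv.subLeft k).tsum_eq fun l => g l ^ 2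
        simp_rw [reflect, ENNReal.tsum_mul_right, mul_pow]
        rw [ENNReal.tsum_comm]
        simp_rw [ENNReal.tsum_mul_right]
    _ ≤ (∑' j, D * f j ^ 2) * ∑' j, g j ^ 2 := by gcongr with j; exact hK j
    _ = D * ((∑' j, f j ^ 2) * ∑' j, g j ^ 2) := by rw [ENNReal.tsum_mul_left, mul_assoc]

end Kernel

section Comparison

variable {x y z c : ℝ≥0∞}

lemma rpow_le_rpow_abs_mul_rpow (hc₀ : c ≠ 0) (hc : c ≠ ∞) (hxy : x ≤ c * y) (hyx : y ≤ c * x)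
    (r : ℝ) : x ^ r ≤ c ^ |r| * y ^ r := by
  rcases le_total 0 r with hr | hr
  · rw [abs_of_nonneg hr, ← ENNReal.mul_rpow_of_nonneg _ _ hr]
    gcongr
  · have hinv : x⁻¹ ≤ c * y⁻¹ := by
      rw [← ENNReal.inv_le_inv, ENNReal.mul_inv (.inl hc₀) (.inl hc), inv_inv, inv_inv]
      rwa [mul_comm, ← div_eq_mul_inv, ENNReal.div_le_iff_le_mul (.inl hc₀) (.inl hc), mul_comm]
    have hr' : 0 ≤ -r := neg_nonneg.2 hr
    calc x ^ r = x⁻¹ ^ (-r) := by rw [ENNReal.inv_rpow, ENNReal.rpow_neg, inv_inv]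
      _ ≤ (c * y⁻¹) ^ (-r) := by gcongr
      _ = c ^ |r| * y ^ r := by
        rw [ENNReal.mul_rpow_of_nonneg _ _ hr', abs_of_nonpos hr, ENNReal.inv_rpow,
          ENNReal.rpow_neg y, inv_inv]

lemma rpow_mul_rpow_le_of_le_of_le (hz₀ : z ≠ 0) (hz : z ≠ ∞) (hxy : x ≤ y) (hxz : x ≤ z)
    (hy : y ≤ x + z) (hz' : z ≤ x + y) (p q : ℝ) : y ^ p * z ^ q ≤ 2 ^ |p| * z ^ (p + q) := by
  have hyz : y ≤ 2 * z := hy.trans (by rw [two_mul]; gcongr)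
  have hzy : z ≤ 2 * y := hz'.trans (by rw [two_mul]; gcongr)
  calc y ^ p * z ^ q ≤ 2 ^ |p| * z ^ p * z ^ q := by
        gcongr; exact rpow_le_rpow_abs_mul_rpow two_ne_zero (by simp) hyz hzy p
    _ = 2 ^ |p| * z ^ (p + q) := by rw [ENNReal.rpow_add _ _ hz₀ hz, mul_assoc]

lemma exists_dyadic_scale {x R : ℝ≥0} (hx : x ≠ 0) (hxR : x ≤ R) :
    ∃ m : ℕ, x ≤ R * 2⁻¹ ^ m ∧ R * 2⁻¹ ^ m ≤ 2 * x := by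
  have hR : 0 < R := hx.pos.trans_le hxR
  obtain ⟨m, hlt, hle⟩ := exists_nat_pow_near_of_lt_one (div_pos hx.pos hR)
    (div_le_one_of_le₀ hxR hR.le) (inv_pos.2 two_pos) (inv_lt_one_of_one_lt₀ one_lt_two)
  refine ⟨m, (div_le_iff₀' hR).1 hle, ?_⟩
  rw [lt_div_iff₀' hR, pow_succ, ← mul_assoc] at hlt
  have := (mul_inv_lt_iff₀ two_pos).1 hlt
  exact (mul_comm x 2 ▸ this).le

end Comparison

section Growth

variable {G : Type*} [NormedAddCommGroup G] {d s t : ℝ}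

/-- The closed ball of radius `R` about `0` with its centre removed: the range of summation for
negative powers of the norm. The centre is removed because `0 ^ (-t) = ∞` in `ℝ≥0∞` for `t > 0`. -/
def puncturedBall (G : Type*) [NormedAddCommGroup G] (R : ℝ≥0) : Set G :=
  {k | k ≠ 0 ∧ ‖k‖₊ ≤ R}

/-- Polynomial growth of degree at most `d`: the dimension condition on the index group. The bound
is imposed on small radii too, so for `d > 0` it contains the uniform discreteness of `G`. -/
def HasPolynomialGrowth (G : Type*) [NormedAddCommGroup G] (d : ℝ) : Prop :=
  ∃ N : ℝ≥0, ∀ R : ℝ≥0, ((puncturedBall G R).encard : ℝ≥0∞) ≤ N * (R : ℝ≥0∞) ^ d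

/-- The low-frequency kernel `|k| ^ (s - d / 2) |j| ^ (-s)`, restricted to `0 < |j| ≤ |k|`. The
power of `|k|` is the one that makes the rows of the kernel bounded in `ℓ²`. -/
noncomputable def lowKernel (d s : ℝ) (k j : G) : ℝ≥0∞ :=
  (puncturedBall G ‖k‖₊).indicator (fun j => ‖k‖ₑ ^ (s - d / 2) * ‖j‖ₑ ^ (-s)) j

lemma indicator_rpow_neg_le_tsum_dyadic (t : ℝ) (R : ℝ≥0) (j : G) :
    (puncturedBall G R).indicator (fun j => ‖j‖ₑ ^ (-t)) j ≤
      ∑' m : ℕ, (puncturedBall G (R * 2⁻¹ ^ m)).indicator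
        (fun _ => 2 ^ |t| * ((R * 2⁻¹ ^ m : ℝ≥0) : ℝ≥0∞) ^ (-t)) j := by
  refine Set.indicator_apply_le' (fun (hjR : j ≠ 0 ∧ ‖j‖₊ ≤ R) => ?_) fun _ => zero_le
  obtain ⟨m, hle, hge⟩ := exists_dyadic_scale (nnnorm_ne_zero_iff.2 hjR.1) hjR.2
  refine le_trans ?_ (ENNReal.le_tsum m)
  have hmem : j ∈ puncturedBall G (R * 2⁻¹ ^ m) := ⟨hjR.1, hle⟩
  rw [Set.indicator_of_mem hmem, ← abs_neg t]
  refine rpow_le_rpow_abs_mul_rpow two_ne_zero ENNReal.ofNat_ne_top ?_ (ENNReal.coe_le_coe.2 hge) _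
  calc ‖j‖ₑ ≤ ((R * 2⁻¹ ^ m : ℝ≥0) : ℝ≥0∞) := mod_cast hle
    _ ≤ 2 * ((R * 2⁻¹ ^ m : ℝ≥0) : ℝ≥0∞) := le_mul_of_one_le_left zero_le one_le_two

lemma tsum_rpow_dyadic (R : ℝ≥0) (r : ℝ) :
    ∑' m : ℕ, ((R * 2⁻¹ ^ m : ℝ≥0) : ℝ≥0∞) ^ r = (1 - (2 ^ r)⁻¹)⁻¹ * (R : ℝ≥0∞) ^ r := by
  have scale (m : ℕ) : ((R * 2⁻¹ ^ m : ℝ≥0) : ℝ≥0∞) ^ r = (R : ℝ≥0∞) ^ r * ((2 ^ r)⁻¹) ^ m := by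
    rw [ENNReal.coe_mul, ENNReal.mul_rpow_of_ne_top ENNReal.coe_ne_top ENNReal.coe_ne_top,
      ENNReal.coe_pow, ENNReal.coe_inv two_ne_zero, ENNReal.coe_ofNat, ← ENNReal.rpow_natCast,
      ← ENNReal.rpow_natCast, ← ENNReal.rpow_mul, mul_comm (m : ℝ), ENNReal.rpow_mul,
      ENNReal.inv_rpow]
  simp_rw [scale, ENNReal.tsum_mul_left, ENNReal.tsum_geometric, mul_comm]

lemma puncturedBall_zero : puncturedBall G 0 = ∅ := by
  ext k; simp [puncturedBall]

lemma HasPolynomialGrowth.tsum_rpow_neg_le (hG : HasPolynomialGrowth G d) (ht : t < d) :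
    ∃ D ≠ ∞, ∀ R : ℝ≥0, ∑' j : G, (puncturedBall G R).indicator (fun j => ‖j‖ₑ ^ (-t)) j ≤
      D * (R : ℝ≥0∞) ^ (d - t) := by
  obtain ⟨N, hN⟩ := hG
  refine ⟨N * 2 ^ |t| * (1 - (2 ^ (d - t))⁻¹)⁻¹, ?_, fun R => ?_⟩
  · have : (2 ^ (d - t) : ℝ≥0∞)⁻¹ < 1 :=
      ENNReal.inv_lt_one.2 (ENNReal.one_lt_rpow ENNReal.one_lt_two (sub_pos.2 ht))
    finiteness [(tsub_pos_of_lt this).ne']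
  rcases eq_or_ne R 0 with rfl | hR
  · simp [puncturedBall_zero]
  set r : ℕ → ℝ≥0 := fun m => R * 2⁻¹ ^ m
  have hr₀ (m : ℕ) : (r m : ℝ≥0∞) ≠ 0 := ENNReal.coe_ne_zero.2 (by positivity)
  calc ∑' j : G, (puncturedBall G R).indicator (fun j => ‖j‖ₑ ^ (-t)) j
      ≤ ∑' j : G, ∑' m, (puncturedBall G (r m)).indicator
          (fun _ => 2 ^ |t| * (r m : ℝ≥0∞) ^ (-t)) j :=
        ENNReal.tsum_le_tsum (indicator_rpow_neg_le_tsum_dyadic t R)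
    _ = ∑' m, (puncturedBall G (r m)).encard * (2 ^ |t| * (r m : ℝ≥0∞) ^ (-t)) := by
        rw [ENNReal.tsum_comm]
        simp_rw [← tsum_subtype, ENNReal.tsum_set_const]
    _ ≤ ∑' m, N * (r m : ℝ≥0∞) ^ d * (2 ^ |t| * (r m : ℝ≥0∞) ^ (-t)) := by
        gcongr with m; exact hN (r m)
    _ = ∑' m, N * 2 ^ |t| * (r m : ℝ≥0∞) ^ (d - t) := by
        congr! 2 with m
        rw [sub_eq_add_neg, ENNReal.rpow_add _ _ (hr₀ m) ENNReal.coe_ne_top]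
        ring
    _ = N * 2 ^ |t| * (1 - (2 ^ (d - t))⁻¹)⁻¹ * (R : ℝ≥0∞) ^ (d - t) := by
        rw [ENNReal.tsum_mul_left, tsum_rpow_dyadic, mul_assoc _ (_ - _)⁻¹]

lemma HasPolynomialGrowth.tsum_lowKernel_sq_le (hG : HasPolynomialGrowth G d) (hs : s < d / 2) :
    ∃ D ≠ ∞, ∀ k : G, ∑' j, lowKernel d s k j ^ 2 ≤ D := by
  obtain ⟨D, hD, hsum⟩ := hG.tsum_rpow_neg_le (t := 2 * s) (by linarith)
  refine ⟨D, hD, fun k => ?_⟩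
  rcases eq_or_ne k 0 with rfl | hk
  · simp [lowKernel, puncturedBall_zero]
  have hk₀ : ‖k‖ₑ ≠ 0 := enorm_ne_zero.2 hk
  calc ∑' j, lowKernel d s k j ^ 2
      = ‖k‖ₑ ^ (2 * s - d) *
          ∑' j, (puncturedBall G ‖k‖₊).indicator (fun j => ‖j‖ₑ ^ (-(2 * s))) j := by
        rw [← ENNReal.tsum_mul_left]
        congr! 2 with j
        by_cases hj : j ∈ puncturedBall G ‖k‖₊
        · simp only [lowKernel, Set.indicator_of_mem hj, mul_pow, ennreal_rpow_sq]
          ring_nf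
        · simp [lowKernel, Set.indicator_of_notMem hj]
    _ ≤ ‖k‖ₑ ^ (2 * s - d) * (D * ‖k‖ₑ ^ (d - 2 * s)) := by gcongr; exact hsum ‖k‖₊
    _ = D := by
        rw [mul_left_comm, ← ENNReal.rpow_add _ _ hk₀ enorm_ne_top, sub_add_sub_cancel, sub_self,
          ENNReal.rpow_zero, mul_one]

lemma HasPolynomialGrowth.one_le_mul_rpow (hG : HasPolynomialGrowth G d) (hd : 0 < d) {r : ℝ}
    (hr : 0 ≤ r) : ∃ c ≠ ∞, ∀ k : G, k ≠ 0 → 1 ≤ c * ‖k‖ₑ ^ r := by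
  obtain ⟨N, hN⟩ := hG
  refine ⟨(N : ℝ≥0∞) ^ (r / d), by finiteness, fun k hk => ?_⟩
  have h1 : 1 ≤ N * ‖k‖ₑ ^ d :=
    calc (1 : ℝ≥0∞) ≤ (puncturedBall G ‖k‖₊).encard :=
          mod_cast Set.one_le_encard_iff_nonempty.2 ⟨k, hk, le_rfl⟩
      _ ≤ N * ‖k‖ₑ ^ d := hN ‖k‖₊
  calc (1 : ℝ≥0∞) ≤ (N * ‖k‖ₑ ^ d) ^ (r / d) := by
        simpa only [ENNReal.one_rpow] using ENNReal.rpow_le_rpow h1 (div_nonneg hr hd.le)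
    _ = N ^ (r / d) * ‖k‖ₑ ^ r := by
      rw [ENNReal.mul_rpow_of_nonneg _ _ (by positivity), ← ENNReal.rpow_mul,
        mul_div_cancel₀ _ hd.ne']

end Growth

section Convolution

variable {G : Type*} [NormedAddCommGroup G] {d s₁ s₂ s₃ : ℝ}

/-- The convolution of sequences indexed by `G ∖ {0}`, encoded as functions on all of `G` whose
value at `0` is ignored. -/
noncomputable def puncturedConv {A : Type*} [NonUnitalNonAssocSemiring A] [TopologicalSpace A]
    (a b : G → A) (k : G) : A :=
  ∑' j : {j : G // j ≠ 0 ∧ j ≠ k}, a j.1 * b (k - j.1)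

/-- The weighted sequence `|k| ^ s f(k)` whose `ℓ²` norm is the homogeneous Sobolev norm of order
`s`. It vanishes at `0`, where the weight would be `∞` for `s < 0`. -/
noncomputable def sobolevWeighted (s : ℝ) (f : G → ℝ≥0∞) : G → ℝ≥0∞ :=
  ({0}ᶜ : Set G).indicator fun k => ‖k‖ₑ ^ s * f k

/-- The square of the homogeneous Sobolev norm of order `s`, with values in `ℝ≥0∞` so that no
summability has to be tracked. -/
noncomputable def sobolevSq (s : ℝ) (f : G → ℝ≥0∞) : ℝ≥0∞ :=
  ∑' k, sobolevWeighted s f k ^ 2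

lemma sobolevWeighted_of_ne_zero {k : G} (hk : k ≠ 0) (s : ℝ) (f : G → ℝ≥0∞) :
    sobolevWeighted s f k = ‖k‖ₑ ^ s * f k :=
  Set.indicator_of_mem hk _

lemma rpow_neg_mul_sobolevWeighted {k : G} (hk : k ≠ 0) (s : ℝ) (f : G → ℝ≥0∞) :
    ‖k‖ₑ ^ (-s) * sobolevWeighted s f k = f k := by
  rw [sobolevWeighted_of_ne_zero hk, ← mul_assoc,
    ← ENNReal.rpow_add _ _ (enorm_ne_zero.2 hk) enorm_ne_top, neg_add_cancel, ENNReal.rpow_zero,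
    one_mul]

lemma rpow_neg_mul_le_lowKernel (hs : s₁ + s₂ + s₃ = d / 2) {j l k : G} (hj : j ≠ 0) (hk : k ≠ 0)
    (hjl : ‖j‖ₑ ≤ ‖l‖ₑ) (hjk : ‖j‖ₑ ≤ ‖k‖ₑ) (hl : ‖l‖ₑ ≤ ‖j‖ₑ + ‖k‖ₑ)
    (hk' : ‖k‖ₑ ≤ ‖j‖ₑ + ‖l‖ₑ) :
    ‖j‖ₑ ^ (-s₁) * (‖l‖ₑ ^ (-s₂) * ‖k‖ₑ ^ (-s₃)) ≤ 2 ^ |s₂| * lowKernel d s₁ k j :=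
  have hmem : j ∈ puncturedBall G ‖k‖₊ := ⟨hj, ENNReal.coe_le_coe.1 hjk⟩
  calc ‖j‖ₑ ^ (-s₁) * (‖l‖ₑ ^ (-s₂) * ‖k‖ₑ ^ (-s₃))
      ≤ ‖j‖ₑ ^ (-s₁) * (2 ^ |(-s₂)| * ‖k‖ₑ ^ (-s₂ + -s₃)) := by
        refine mul_le_mul' le_rfl ?_
        exact rpow_mul_rpow_le_of_le_of_le (enorm_ne_zero.2 hk) enorm_ne_top hjl hjk hl hk' _ _
    _ = 2 ^ |s₂| * lowKernel d s₁ k j := by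
        rw [lowKernel, Set.indicator_of_mem hmem, abs_neg,
          show -s₂ + -s₃ = s₁ - d / 2 by linarith, mul_comm, mul_assoc]

lemma rpow_neg_mul_le_sum_lowKernel (hs : s₁ + s₂ + s₃ = d / 2) {j l k : G} (hj : j ≠ 0)
    (hl : l ≠ 0) (hk : k ≠ 0) (hsum : j + l = k) :
    ‖j‖ₑ ^ (-s₁) * ‖l‖ₑ ^ (-s₂) * ‖k‖ₑ ^ (-s₃) ≤ 2 ^ max |s₁| |s₂| *
      (lowKernel d s₁ k j + lowKernel d s₂ k l + lowKernel d s₃ j k) := by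
  have hk_le : ‖k‖ₑ ≤ ‖j‖ₑ + ‖l‖ₑ := hsum ▸ enorm_add_le j l
  have hj_le : ‖j‖ₑ ≤ ‖k‖ₑ + ‖l‖ₑ := eq_sub_of_add_eq hsum ▸ enorm_sub_le
  have hl_le : ‖l‖ₑ ≤ ‖k‖ₑ + ‖j‖ₑ := eq_sub_of_add_eq' hsum ▸ enorm_sub_le
  have enlarge {r : ℝ} {x y : ℝ≥0∞} (hr : |r| ≤ max |s₁| |s₂|) (hxy : x ≤ y) :
      2 ^ |r| * x ≤ 2 ^ max |s₁| |s₂| * y :=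
    mul_le_mul' (ENNReal.rpow_le_rpow_of_exponent_le one_le_two hr) hxy
  have smallest : (‖j‖ₑ ≤ ‖l‖ₑ ∧ ‖j‖ₑ ≤ ‖k‖ₑ) ∨ (‖l‖ₑ ≤ ‖j‖ₑ ∧ ‖l‖ₑ ≤ ‖k‖ₑ) ∨
      (‖k‖ₑ ≤ ‖l‖ₑ ∧ ‖k‖ₑ ≤ ‖j‖ₑ) := by grind
  rcases smallest with ⟨hjl, hjk⟩ | ⟨hlj, hlk⟩ | ⟨hkl, hkj⟩
  · rw [mul_assoc]
    exact (rpow_neg_mul_le_lowKernel hs hj hk hjl hjk (add_comm ‖j‖ₑ _ ▸ hl_le) hk_le).trans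
      (enlarge (le_max_right _ _) (le_add_right le_self_add))
  · rw [mul_right_comm, mul_comm]
    have hs' : s₂ + s₁ + s₃ = d / 2 := by rw [add_comm s₂, hs]
    exact (rpow_neg_mul_le_lowKernel hs' hl hk hlj hlk (add_comm ‖k‖ₑ _ ▸ hj_le)
      (add_comm ‖j‖ₑ _ ▸ hk_le)).trans
      (enlarge (le_max_left _ _) (le_add_right le_add_self))
  · rw [mul_comm (_ * _), mul_comm (‖j‖ₑ ^ _)]
    have hs' : s₃ + s₂ + s₁ = d / 2 := by rw [← hs]; ring
    exact (rpow_neg_mul_le_lowKernel hs' hk hj hkl hkj hl_le hj_le).trans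
      (enlarge (le_max_right _ _) le_add_self)

lemma sobolevWeighted_puncturedConv_le (hs : s₁ + s₂ + s₃ = d / 2) (f g : G → ℝ≥0∞) (k : G) :
    sobolevWeighted (-s₃) (puncturedConv f g) k ≤ 2 ^ max |s₁| |s₂| *
      (kernelConv (fun k j => lowKernel d s₁ k j) (sobolevWeighted s₁ f) (sobolevWeighted s₂ g) k +
        kernelConv (fun k j => lowKernel d s₂ k (k - j)) (sobolevWeighted s₁ f)
          (sobolevWeighted s₂ g) k +
        kernelConv (fun k j => lowKernel d s₃ j k) (sobolevWeighted s₁ f)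
          (sobolevWeighted s₂ g) k) := by
  simp only [kernelConv, ← ENNReal.tsum_add, ← add_mul]
  refine Set.indicator_apply_le' (fun hk => ?_) fun _ => zero_le
  rw [puncturedConv, ← ENNReal.tsum_mul_left, ← ENNReal.tsum_mul_left]
  refine le_trans (ENNReal.tsum_le_tsum ?_)
    (ENNReal.tsum_comp_le_tsum_of_injective Subtype.val_injective _)
  rintro ⟨j, hj, hjk⟩
  have hl : k - j ≠ 0 := sub_ne_zero.2 hjk.symm
  calc ‖k‖ₑ ^ (-s₃) * (f j * g (k - j))
      = ‖j‖ₑ ^ (-s₁) * ‖k - j‖ₑ ^ (-s₂) * ‖k‖ₑ ^ (-s₃) *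
          (sobolevWeighted s₁ f j * sobolevWeighted s₂ g (k - j)) := by
        rw [← rpow_neg_mul_sobolevWeighted hj s₁ f, ← rpow_neg_mul_sobolevWeighted hl s₂ g]
        ring
    _ ≤ 2 ^ max |s₁| |s₂| *
          (lowKernel d s₁ k j + lowKernel d s₂ k (k - j) + lowKernel d s₃ j k) *
          (sobolevWeighted s₁ f j * sobolevWeighted s₂ g (k - j)) :=
        mul_le_mul' (rpow_neg_mul_le_sum_lowKernel hs hj hl hk (add_sub_cancel j k)) le_rfl
    _ = _ := mul_assoc _ _ _

theorem HasPolynomialGrowth.sobolevSq_puncturedConv_le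
    (hG : HasPolynomialGrowth G d) (hs : s₁ + s₂ + s₃ = d / 2) (h₁ : s₁ < d / 2)
    (h₂ : s₂ < d / 2) (h₃ : s₃ < d / 2) :
    ∃ C ≠ ∞, ∀ f g : G → ℝ≥0∞, sobolevSq (-s₃) (puncturedConv f g) ≤
      C * (sobolevSq s₁ f * sobolevSq s₂ g) := by
  obtain ⟨D₁, hD₁, row₁⟩ := hG.tsum_lowKernel_sq_le h₁
  obtain ⟨D₂, hD₂, row₂⟩ := hG.tsum_lowKernel_sq_le h₂
  obtain ⟨D₃, hD₃, col₃⟩ := hG.tsum_lowKernel_sq_le h₃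
  have row₂' (k : G) : ∑' j, lowKernel d s₂ k (k - j) ^ 2 ≤ D₂ :=
    ((Equiv.subLeft k).tsum_eq fun l => lowKernel d s₂ k l ^ 2).trans_le (row₂ k)
  set M : ℝ≥0∞ := 2 ^ max |s₁| |s₂|
  refine ⟨M ^ 2 * (3 * (D₁ + D₂ + D₃)), by finiteness, fun f g => ?_⟩
  set F := sobolevWeighted s₁ f
  set H := sobolevWeighted s₂ g
  set P := sobolevSq s₁ f * sobolevSq s₂ g
  set T : (G → G → ℝ≥0∞) → G → ℝ≥0∞ := fun K => kernelConv K F H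
  set K₁ : G → G → ℝ≥0∞ := fun k j => lowKernel d s₁ k j
  set K₂ : G → G → ℝ≥0∞ := fun k j => lowKernel d s₂ k (k - j)
  set K₃ : G → G → ℝ≥0∞ := fun k j => lowKernel d s₃ j k
  calc sobolevSq (-s₃) (puncturedConv f g)
      ≤ ∑' k, (M * (T K₁ k + T K₂ k + T K₃ k)) ^ 2 := by
        rw [sobolevSq]
        gcongr with k
        exact sobolevWeighted_puncturedConv_le hs f g k
    _ ≤ ∑' k, M ^ 2 * (3 * (T K₁ k ^ 2 + T K₂ k ^ 2 + T K₃ k ^ 2)) := by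
        gcongr with k
        rw [mul_pow]
        gcongr
        exact add_add_sq_le_three_mul _ _ _
    _ = M ^ 2 * (3 * (∑' k, T K₁ k ^ 2 + ∑' k, T K₂ k ^ 2 + ∑' k, T K₃ k ^ 2)) := by
        simp only [ENNReal.tsum_mul_left, ENNReal.tsum_add]
    _ ≤ M ^ 2 * (3 * (D₁ * P + D₂ * P + D₃ * P)) := by
        gcongr
        · exact tsum_kernelConv_sq_le_of_row row₁ F H
        · exact tsum_kernelConv_sq_le_of_row row₂' F H
        · exact tsum_kernelConv_sq_le_of_col col₃ F H
    _ = M ^ 2 * (3 * (D₁ + D₂ + D₃)) * P := by ring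

lemma HasPolynomialGrowth.puncturedConv_zero_sq_le (hG : HasPolynomialGrowth G d) (hd : 0 < d)
    (hs : 0 ≤ s₁ + s₂) :
    ∃ C ≠ ∞, ∀ f g : G → ℝ≥0∞, puncturedConv f g 0 ^ 2 ≤
      C * (sobolevSq s₁ f * sobolevSq s₂ g) := by
  obtain ⟨c, hc, hlow⟩ := hG.one_le_mul_rpow hd hs
  refine ⟨c ^ 2, by finiteness, fun f g => ?_⟩
  have pointwise {j : G} (hj : j ≠ 0) :
      f j * g (-j) ≤ c * (sobolevWeighted s₁ f j * sobolevWeighted s₂ g (-j)) :=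
    calc f j * g (-j) ≤ c * ‖j‖ₑ ^ (s₁ + s₂) * (f j * g (-j)) :=
          le_mul_of_one_le_left zero_le (hlow j hj)
      _ = c * (sobolevWeighted s₁ f j * sobolevWeighted s₂ g (-j)) := by
          rw [sobolevWeighted_of_ne_zero hj, sobolevWeighted_of_ne_zero (neg_ne_zero.2 hj),
            enorm_neg, ENNReal.rpow_add _ _ (enorm_ne_zero.2 hj) enorm_ne_top]
          ring
  calc puncturedConv f g 0 ^ 2
      ≤ (c * ∑' j, sobolevWeighted s₁ f j * sobolevWeighted s₂ g (-j)) ^ 2 := by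
        gcongr
        rw [puncturedConv, ← ENNReal.tsum_mul_left]
        refine le_trans (ENNReal.tsum_le_tsum fun j => ?_)
          (ENNReal.tsum_comp_le_tsum_of_injective Subtype.val_injective _)
        simpa only [zero_sub] using pointwise j.2.1
    _ ≤ c ^ 2 * (sobolevSq s₁ f * ∑' k, sobolevWeighted s₂ g (-k) ^ 2) := by
        rw [mul_pow]
        gcongr
        exact tsum_mul_sq_le _ _
    _ = c ^ 2 * (sobolevSq s₁ f * sobolevSq s₂ g) := by
        congr 2
        exact (Equiv.neg G).tsum_eq fun k => sobolevWeighted s₂ g k ^ 2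

end Convolution

section Gevrey

variable {G E A : Type*} [NormedAddCommGroup G] [SeminormedAddCommGroup E] [NonUnitalNormedRing A]
  {d s s₁ s₂ α : ℝ}

/-- The summand of the squared Sobolev–Gevrey norm of order `s` and radius `α`; the counterpart of
`gterm` over a general index group. -/
noncomputable def gevreyTerm (s α : ℝ) (a : G → E) (k : G) : ℝ :=
  ‖k‖ ^ (2 * s) * Real.exp (2 * α * ‖k‖) * ‖a k‖ ^ 2

/-- The Sobolev–Gevrey norm of order `s` and radius `α`; the counterpart of `gnorm` over a general
index group. It is `0` when the sum diverges. -/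
noncomputable def gevreyNorm (s α : ℝ) (a : G → E) : ℝ :=
  √(∑' k : {k : G // k ≠ 0}, gevreyTerm s α a k.1)

/-- The extended nonnegative sequence `e ^ (α |k|) |a(k)|`, whose homogeneous Sobolev norm is the
Sobolev–Gevrey norm of `a`. -/
noncomputable def gevreyModulus (α : ℝ) (a : G → E) (k : G) : ℝ≥0∞ :=
  ENNReal.ofReal (Real.exp (α * ‖k‖)) * ‖a k‖ₑ

lemma gevreyTerm_nonneg (s α : ℝ) (a : G → E) (k : G) : 0 ≤ gevreyTerm s α a k := by
  unfold gevreyTerm; positivity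

lemma ofReal_gevreyTerm {k : G} (hk : k ≠ 0) (s α : ℝ) (a : G → E) :
    ENNReal.ofReal (gevreyTerm s α a k) = sobolevWeighted s (gevreyModulus α a) k ^ 2 := by
  have hpos : 0 < ‖k‖ := norm_pos_iff.2 hk
  have hsq : gevreyTerm s α a k = (‖k‖ ^ s * (Real.exp (α * ‖k‖) * ‖a k‖)) ^ 2 := by
    rw [gevreyTerm, mul_comm 2 s, Real.rpow_mul hpos.le, mul_assoc 2 α, mul_comm 2 (α * ‖k‖),
      Real.exp_mul, Real.rpow_two, Real.rpow_two]
    ring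
  rw [hsq, sobolevWeighted_of_ne_zero hk, gevreyModulus, ENNReal.ofReal_pow (by positivity),
    ENNReal.ofReal_mul (by positivity), ENNReal.ofReal_mul (by positivity), ofReal_norm,
    ← ENNReal.ofReal_rpow_of_pos hpos, ofReal_norm]

lemma sobolevSq_gevreyModulus (s α : ℝ) (a : G → E) :
    sobolevSq s (gevreyModulus α a) =
      ∑' k : {k : G // k ≠ 0}, ENNReal.ofReal (gevreyTerm s α a k.1) := by
  have support_subset : Function.support (fun k => sobolevWeighted s (gevreyModulus α a) k ^ 2) ⊆
      {k | k ≠ 0} := fun k hk h₀ => hk (by simp [sobolevWeighted, h₀])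
  rw [sobolevSq, ← tsum_subtype_eq_of_support_subset support_subset]
  exact tsum_congr fun k => (ofReal_gevreyTerm k.2 s α a).symm

lemma summable_gevreyTerm_iff {a : G → E} :
    Summable (fun k : {k : G // k ≠ 0} => gevreyTerm s α a k.1) ↔
      sobolevSq s (gevreyModulus α a) ≠ ∞ := by
  rw [sobolevSq_gevreyModulus]
  refine ⟨Summable.tsum_ofReal_ne_top, fun h => ?_⟩
  simpa only [ENNReal.toReal_ofReal (gevreyTerm_nonneg s α a _)] using ENNReal.summable_toReal h

lemma gevreyNorm_eq_sqrt_toReal (s α : ℝ) (a : G → E) :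
    gevreyNorm s α a = √(sobolevSq s (gevreyModulus α a)).toReal := by
  rw [sobolevSq_gevreyModulus, ENNReal.tsum_toReal_eq fun _ => ENNReal.ofReal_ne_top]
  simp only [ENNReal.toReal_ofReal (gevreyTerm_nonneg s α a _), gevreyNorm]

lemma gevreyModulus_mul_le (hα : 0 ≤ α) (a b : G → A) (j k : G) :
    ENNReal.ofReal (Real.exp (α * ‖k‖)) * ‖a j * b (k - j)‖ₑ ≤
      gevreyModulus α a j * gevreyModulus α b (k - j) := by
  have hexp : Real.exp (α * ‖k‖) ≤ Real.exp (α * ‖j‖) * Real.exp (α * ‖k - j‖) := by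
    rw [← Real.exp_add, ← mul_add]
    gcongr
    exact norm_le_norm_add_norm_sub' k j
  have hmul : ‖a j * b (k - j)‖ₑ ≤ ‖a j‖ₑ * ‖b (k - j)‖ₑ := by
    simp only [enorm_eq_nnnorm]
    exact_mod_cast nnnorm_mul_le _ _
  calc ENNReal.ofReal (Real.exp (α * ‖k‖)) * ‖a j * b (k - j)‖ₑ
      ≤ ENNReal.ofReal (Real.exp (α * ‖j‖) * Real.exp (α * ‖k - j‖)) *
          (‖a j‖ₑ * ‖b (k - j)‖ₑ) := by gcongr
    _ = gevreyModulus α a j * gevreyModulus α b (k - j) := by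
        rw [ENNReal.ofReal_mul (Real.exp_nonneg _), gevreyModulus, gevreyModulus]
        ring

lemma gevreyModulus_puncturedConv_le (hα : 0 ≤ α) (a b : G → A) (k : G) :
    gevreyModulus α (puncturedConv a b) k ≤
      puncturedConv (gevreyModulus α a) (gevreyModulus α b) k :=
  calc gevreyModulus α (puncturedConv a b) k
      ≤ ENNReal.ofReal (Real.exp (α * ‖k‖)) *
          ∑' j : {j : G // j ≠ 0 ∧ j ≠ k}, ‖a j.1 * b (k - j.1)‖ₑ := by
        rw [gevreyModulus, puncturedConv]
        exact mul_le_mul' le_rfl enorm_tsum_le_tsum_enorm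
    _ ≤ puncturedConv (gevreyModulus α a) (gevreyModulus α b) k := by
        rw [← ENNReal.tsum_mul_left]
        exact ENNReal.tsum_le_tsum fun j => gevreyModulus_mul_le hα a b j k

lemma summable_mul_of_puncturedConv_ne_top [CompleteSpace A] (hα : 0 ≤ α) {a b : G → A} {k : G}
    (h : puncturedConv (gevreyModulus α a) (gevreyModulus α b) k ≠ ∞) :
    Summable fun j : {j : G // j ≠ 0 ∧ j ≠ k} => a j.1 * b (k - j.1) := by
  refine .of_enorm (ne_top_of_le_ne_top h (ENNReal.tsum_le_tsum fun j => ?_))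
  refine le_trans ?_ (gevreyModulus_mul_le hα a b j k)
  refine le_mul_of_one_le_left zero_le (ENNReal.one_le_ofReal.2 (Real.one_le_exp ?_))
  positivity

lemma sobolevSq_mono (s : ℝ) {f g : G → ℝ≥0∞} (hfg : ∀ k, f k ≤ g k) :
    sobolevSq s f ≤ sobolevSq s g := by
  unfold sobolevSq sobolevWeighted
  gcongr with k
  exact hfg k

lemma ne_top_of_sobolevSq_ne_top {f : G → ℝ≥0∞} (hf : sobolevSq s f ≠ ∞) {k : G} (hk : k ≠ 0) :
    f k ≠ ∞ := by
  have hweighted : sobolevWeighted s f k ≠ ∞ := fun h =>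
    hf (top_unique ((by simp [h] : ∞ ≤ sobolevWeighted s f k ^ 2).trans (ENNReal.le_tsum k)))
  rw [← rpow_neg_mul_sobolevWeighted hk s f]
  exact ENNReal.mul_ne_top (ENNReal.rpow_ne_top_of_ne_zero (enorm_ne_zero.2 hk) enorm_ne_top)
    hweighted

lemma HasPolynomialGrowth.puncturedConv_ne_top (hG : HasPolynomialGrowth G d)
    (h₁ : s₁ < d / 2) (h₂ : s₂ < d / 2) (hs : 0 < s₁ + s₂) {f g : G → ℝ≥0∞}
    (hf : sobolevSq s₁ f ≠ ∞) (hg : sobolevSq s₂ g ≠ ∞) (k : G) : puncturedConv f g k ≠ ∞ := by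
  rcases eq_or_ne k 0 with rfl | hk
  · obtain ⟨C, hC, hconv⟩ := hG.puncturedConv_zero_sq_le (by linarith) hs.le
    have hsq : puncturedConv f g 0 ^ 2 ≠ ∞ := ne_top_of_le_ne_top (by finiteness) (hconv f g)
    exact fun h => hsq (by simp [h])
  · obtain ⟨C, hC, hconv⟩ := hG.sobolevSq_puncturedConv_le (s₁ := s₁) (s₂ := s₂)
      (add_sub_cancel _ _) h₁ h₂ (by linarith)
    exact ne_top_of_sobolevSq_ne_top (ne_top_of_le_ne_top (by finiteness) (hconv f g)) hk

theorem stmt2_general [CompleteSpace A] (hG : HasPolynomialGrowth G d) (h1 : s₁ < d / 2)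
    (h2 : s₂ < d / 2) (h3 : 0 < s₁ + s₂) :
    ∃ C : ℝ, 0 < C ∧ ∀ α : ℝ, 0 ≤ α → ∀ a b : G → A,
      Summable (fun k : {k : G // k ≠ 0} => gevreyTerm s₁ α a k.1) →
      Summable (fun k : {k : G // k ≠ 0} => gevreyTerm s₂ α b k.1) →
      (∀ k : G, Summable (fun j : {j : G // j ≠ 0 ∧ j ≠ k} => a j.1 * b (k - j.1))) ∧
      Summable (fun k : {k : G // k ≠ 0} =>
        gevreyTerm (s₁ + s₂ - d / 2) α (puncturedConv a b) k.1) ∧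
      gevreyNorm (s₁ + s₂ - d / 2) α (puncturedConv a b) ≤
        C * gevreyNorm s₁ α a * gevreyNorm s₂ α b := by
  obtain ⟨C, hC, hconv⟩ := hG.sobolevSq_puncturedConv_le (s₁ := s₁) (s₂ := s₂)
    (add_sub_cancel _ _) h1 h2 (by linarith)
  rw [neg_sub] at hconv
  refine ⟨√C.toReal + 1, by positivity, fun α hα a b ha hb => ?_⟩
  rw [summable_gevreyTerm_iff] at ha hb
  have hle : sobolevSq (s₁ + s₂ - d / 2) (gevreyModulus α (puncturedConv a b)) ≤
      C * (sobolevSq s₁ (gevreyModulus α a) * sobolevSq s₂ (gevreyModulus α b)) :=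
    (sobolevSq_mono _ (gevreyModulus_puncturedConv_le hα a b)).trans (hconv _ _)
  have hfin := ENNReal.mul_ne_top hC (ENNReal.mul_ne_top ha hb)
  refine ⟨fun k => summable_mul_of_puncturedConv_ne_top hα
    (hG.puncturedConv_ne_top h1 h2 h3 ha hb k),
    summable_gevreyTerm_iff.2 (ne_top_of_le_ne_top hfin hle), ?_⟩
  simp only [gevreyNorm_eq_sqrt_toReal]
  calc √(sobolevSq (s₁ + s₂ - d / 2) (gevreyModulus α (puncturedConv a b))).toReal
      ≤ √(C * (sobolevSq s₁ (gevreyModulus α a) * sobolevSq s₂ (gevreyModulus α b))).toReal :=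
        Real.sqrt_le_sqrt (ENNReal.toReal_mono hfin hle)
    _ = √C.toReal * √(sobolevSq s₁ (gevreyModulus α a)).toReal *
          √(sobolevSq s₂ (gevreyModulus α b)).toReal := by
        rw [ENNReal.toReal_mul, ENNReal.toReal_mul, Real.sqrt_mul ENNReal.toReal_nonneg,
          Real.sqrt_mul ENNReal.toReal_nonneg, mul_assoc]
    _ ≤ (√C.toReal + 1) * √(sobolevSq s₁ (gevreyModulus α a)).toReal *
          √(sobolevSq s₂ (gevreyModulus α b)).toReal := by
        gcongr
        exact le_add_of_nonneg_right zero_le_one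

end Gevrey

section Lattice

/-- The Euclidean norm on the lattice `ℤ ^ ι`, agreeing with `wt` for `ι = Fin 3`. It is bundled,
and not an instance, because functions on a finite type already carry the supremum norm. -/
noncomputable def euclideanNorm (ι : Type*) [Fintype ι] : AddGroupNorm (ι → ℤ) where
  toFun k := √(∑ i, (k i : ℝ) ^ 2)
  map_zero' := by simp
  neg' k := by simp
  add_le' k l := by
    simpa [EuclideanSpace.norm_eq] using
      norm_add_le (WithLp.toLp 2 fun i => (k i : ℝ)) (WithLp.toLp 2 fun i => (l i : ℝ))
  eq_zero_of_map_eq_zero' k hk := by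
    rw [Real.sqrt_eq_zero (by positivity), Finset.sum_eq_zero_iff_of_nonneg fun _ _ => sq_nonneg _]
      at hk
    ext i
    simpa using hk i (Finset.mem_univ i)

variable {ι : Type*} [Fintype ι]

lemma abs_le_euclideanNorm (k : ι → ℤ) (i : ι) : |(k i : ℝ)| ≤ euclideanNorm ι k :=
  Real.abs_le_sqrt (Finset.single_le_sum (f := fun i => (k i : ℝ) ^ 2)
    (fun _ _ => sq_nonneg _) (Finset.mem_univ i))

lemma one_le_euclideanNorm {k : ι → ℤ} (hk : k ≠ 0) : 1 ≤ euclideanNorm ι k := by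
  obtain ⟨i, hi⟩ := Function.ne_iff.1 hk
  exact le_trans (mod_cast Int.one_le_abs hi) (abs_le_euclideanNorm k i)

lemma mem_Icc_floor_of_euclideanNorm_le [DecidableEq ι] {k : ι → ℤ} {R : ℝ}
    (hk : euclideanNorm ι k ≤ R) :
    k ∈ Finset.Icc (fun _ => -⌊R⌋) (fun _ : ι => ⌊R⌋) := by
  have hki (i : ι) : |k i| ≤ ⌊R⌋ :=
    Int.le_floor.2 (mod_cast (abs_le_euclideanNorm k i).trans hk)
  simp only [Finset.mem_Icc, Pi.le_def]
  exact ⟨fun i => (abs_le.1 (hki i)).1, fun i => (abs_le.1 (hki i)).2⟩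

lemma card_Icc_floor_le (ι : Type*) [Fintype ι] [DecidableEq ι] {R : ℝ} (hR : 1 ≤ R) :
    ((Finset.Icc (fun _ => -⌊R⌋) (fun _ : ι => ⌊R⌋)).card : ℝ) ≤ (3 * R) ^ Fintype.card ι := by
  have hside : ((⌊R⌋ + 1 - -⌊R⌋).toNat : ℝ) ≤ 3 * R := by
    have hfloor : 0 ≤ ⌊R⌋ := Int.floor_nonneg.2 (by linarith)
    have hcast : ((⌊R⌋ + 1 - -⌊R⌋).toNat : ℝ) = 2 * ⌊R⌋ + 1 := by
      rw [← Int.cast_natCast, Int.toNat_of_nonneg (by linarith)]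
      push_cast; ring
    linarith [Int.floor_le R]
  rw [Pi.card_Icc]
  simp only [Int.card_Icc, Finset.prod_const, Finset.card_univ, Nat.cast_pow]
  gcongr

theorem hasPolynomialGrowth_euclideanNorm (ι : Type*) [Fintype ι] :
    @HasPolynomialGrowth (ι → ℤ) (euclideanNorm ι).toNormedAddCommGroup (Fintype.card ι) := by
  classical
  let _ := (euclideanNorm ι).toNormedAddCommGroup
  refine ⟨3 ^ Fintype.card ι, fun R => ?_⟩
  rcases lt_or_ge R 1 with hR | hR
  · have hempty : puncturedBall (ι → ℤ) R = ∅ := Set.eq_empty_of_forall_notMem fun k hk =>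
      (one_le_euclideanNorm hk.1).not_gt (lt_of_le_of_lt hk.2 hR)
    simp [hempty]
  set Q := Finset.Icc (fun _ => -⌊(R : ℝ)⌋) (fun _ : ι => ⌊(R : ℝ)⌋)
  have hsub : puncturedBall (ι → ℤ) R ⊆ Q := fun k hk => mem_Icc_floor_of_euclideanNorm_le hk.2
  have hcard : (Q.card : ℝ≥0) ≤ (3 * R) ^ Fintype.card ι := mod_cast card_Icc_floor_le ι hR
  calc ((puncturedBall (ι → ℤ) R).encard : ℝ≥0∞) ≤ (Q.card : ℝ≥0∞) := by
        exact_mod_cast (Set.encard_le_encard hsub).trans_eq (Set.encard_coe_eq_coe_finsetCard Q)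
    _ ≤ ((3 ^ Fintype.card ι : ℝ≥0) : ℝ≥0∞) * (R : ℝ≥0∞) ^ (Fintype.card ι : ℝ) := by
        rw [ENNReal.rpow_natCast]
        exact_mod_cast hcard.trans_eq (mul_pow 3 R _)

end Lattice

/-- convolution estimate `‖a∗b‖_{s₁+s₂−3/2} ≤ C ‖a‖_{s₁} ‖b‖_{s₂}`
for `s₁, s₂ < 3/2`, `s₁ + s₂ > 0`. -/
theorem stmt2 (s₁ s₂ : ℝ) (h1 : s₁ < 3 / 2) (h2 : s₂ < 3 / 2) (h3 : 0 < s₁ + s₂) :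
    ∃ C : ℝ, 0 < C ∧ ∀ a b : (Fin 3 → ℤ) → ℂ,
      Summable (fun k : {k : Fin 3 → ℤ // k ≠ 0} => gterm s₁ 0 a k.1) →
      Summable (fun k : {k : Fin 3 → ℤ // k ≠ 0} => gterm s₂ 0 b k.1) →
      (∀ k : Fin 3 → ℤ,
        Summable (fun j : {j : Fin 3 → ℤ // j ≠ 0 ∧ j ≠ k} => a j.1 * b (k - j.1))) ∧
      Summable (fun k : {k : Fin 3 → ℤ // k ≠ 0} =>
        gterm (s₁ + s₂ - 3 / 2) 0 (convSeq a b) k.1) ∧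
      gnorm (s₁ + s₂ - 3 / 2) 0 (convSeq a b) ≤ C * gnorm s₁ 0 a * gnorm s₂ 0 b := by
  let _ := (euclideanNorm (Fin 3)).toNormedAddCommGroup
  obtain ⟨C, hC, hbound⟩ := stmt2_general (G := Fin 3 → ℤ) (A := ℂ) (d := 3)
    (by simpa using hasPolynomialGrowth_euclideanNorm (Fin 3)) h1 h2 h3
  exact ⟨C, hC, hbound 0 le_rfl⟩
end

section
/- Let b > 0, c > 0, γ > 0, T > 0 and let y : [0, T) → (0, ∞) be differentiable with y'(t) ≤ c·y(t)^(1+γ) + b·y(t) for all t ∈ [0, T). Set t* = (1/(bγ)) · log(1 + b/(c·y(0)^γ)). Then for all t ∈ [0, min(T, t*)), one has 1 − (c/b)·y(0)^γ·(e^{bγt} − 1) > 0 and y(t) ≤ e^{bt} · y(0) · (1 − (c/b)·y(0)^γ·(e^{bγt} − 1))^(−1/γ). -/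
/-!
The map `F x = -x ^ (-γ) / γ` has derivative `x ^ (-γ - 1)`, so it is increasing on `(0, ∞)` and
turns `y' ≤ c y ^ (1 + γ) + b y` into the linear inequality `(F ∘ y)' ≤ -b γ (F ∘ y) + c`, to which
Grönwall's inequality applies. The Grönwall bound is itself `F` of the explicit solution of the
Bernoulli equation, and `F` can be cancelled because it is increasing.
-/

open Set

/-- The substitution linearizing the Bernoulli equation `y' = c y ^ (1 + γ) + b y`. The usual
substitution is `x ^ (-γ)`; the factor `-1 / γ` makes the map increasing on `(0, ∞)` for either
sign of `γ`. -/
noncomputable def bernoulliTransform (γ x : ℝ) : ℝ := -x ^ (-γ) / γ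

section Transform

variable {γ x : ℝ}

theorem hasDerivAt_bernoulliTransform (hγ : γ ≠ 0) (hx : 0 < x) :
    HasDerivAt (bernoulliTransform γ) (x ^ (-γ - 1)) x := by
  have h := ((Real.hasDerivAt_rpow_const (p := -γ) (Or.inl hx.ne')).neg).div_const γ
  rwa [neg_mul, neg_neg, mul_div_cancel_left₀ _ hγ] at h

theorem strictMonoOn_bernoulliTransform (hγ : γ ≠ 0) :
    StrictMonoOn (bernoulliTransform γ) (Ioi 0) := by
  refine strictMonoOn_of_deriv_pos (convex_Ioi 0)
    (fun x hx => (hasDerivAt_bernoulliTransform hγ hx).continuousAt.continuousWithinAt) ?_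
  intro x hx
  rw [interior_Ioi] at hx
  rw [(hasDerivAt_bernoulliTransform hγ hx).deriv]
  exact Real.rpow_pos_of_pos hx _

theorem rpow_mul_le_bernoulliTransform {b c v : ℝ} (hγ : γ ≠ 0) (hx : 0 < x)
    (hv : v ≤ c * x ^ (1 + γ) + b * x) :
    x ^ (-γ - 1) * v ≤ -(b * γ) * bernoulliTransform γ x + c := by
  have h_pow : x ^ (-γ - 1) * x ^ (1 + γ) = 1 := by
    rw [← Real.rpow_add hx, show -γ - 1 + (1 + γ) = 0 by ring, Real.rpow_zero]
  have h_lin : x ^ (-γ - 1) * x = x ^ (-γ) := by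
    rw [← Real.rpow_add_one hx.ne', sub_add_cancel]
  calc
    x ^ (-γ - 1) * v ≤ x ^ (-γ - 1) * (c * x ^ (1 + γ) + b * x) := by gcongr
    _ = c * (x ^ (-γ - 1) * x ^ (1 + γ)) + b * (x ^ (-γ - 1) * x) := by ring
    _ = c + b * x ^ (-γ) := by rw [h_pow, h_lin, mul_one]
    _ = -(b * γ) * bernoulliTransform γ x + c := by
      rw [bernoulliTransform]
      field

theorem bernoulliTransform_exp_mul_mul_rpow {b q t : ℝ} (hγ : γ ≠ 0) (hx : 0 < x) (hq : 0 < q) :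
    bernoulliTransform γ (Real.exp (b * t) * x * q ^ (-(1 / γ))) =
      Real.exp (-(b * γ) * t) * q * bernoulliTransform γ x := by
  have h_exp : Real.exp (b * t) ^ (-γ) = Real.exp (-(b * γ) * t) := by
    rw [← Real.exp_mul]
    ring_nf
  have h_q : (q ^ (-(1 / γ))) ^ (-γ) = q := by
    rw [← Real.rpow_mul hq.le, neg_mul_neg, one_div_mul_cancel hγ, Real.rpow_one]
  rw [bernoulliTransform, bernoulliTransform, Real.mul_rpow (by positivity) (by positivity),
    Real.mul_rpow (by positivity) hx.le, h_exp, h_q]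
  ring

theorem gronwallBound_bernoulliTransform {b c t : ℝ} (hb : b ≠ 0) (hγ : γ ≠ 0) (hx : 0 < x) :
    gronwallBound (bernoulliTransform γ x) (-(b * γ)) c t =
      Real.exp (-(b * γ) * t) * (1 - (c / b) * x ^ γ * (Real.exp (b * γ * t) - 1)) *
        bernoulliTransform γ x := by
  have h_exp : Real.exp (-(b * γ) * t) = (Real.exp (b * γ * t))⁻¹ := by
    rw [neg_mul, Real.exp_neg]
  simp only [gronwallBound_of_K_ne_0 (neg_ne_zero.mpr (mul_ne_zero hb hγ)), bernoulliTransform,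
    Real.rpow_neg hx.le, h_exp]
  field

end Transform

theorem le_gronwallBound_of_hasDerivWithinAt_Ici {f f' : ℝ → ℝ} {K ε a t : ℝ} (hat : a ≤ t)
    (hcont : ContinuousOn f (Icc a t))
    (hderiv : ∀ s ∈ Ico a t, HasDerivWithinAt f (f' s) (Ici s) s)
    (hbound : ∀ s ∈ Ico a t, f' s ≤ K * f s + ε) :
    f t ≤ gronwallBound (f a) K ε (t - a) := by
  refine le_gronwallBound_of_liminf_deriv_right_le hcont (fun s hs r hr => ?_) le_rfl hbound t
    (right_mem_Icc.mpr hat)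
  simpa only [slope_def_module, smul_eq_mul] using (hderiv s hs).liminf_right_slope_le hr

theorem bernoulliTransform_le_gronwallBound {b c γ a t : ℝ} {y y' : ℝ → ℝ} (hγ : γ ≠ 0)
    (hat : a ≤ t) (hpos : ∀ s ∈ Icc a t, 0 < y s) (hcont : ContinuousOn y (Icc a t))
    (hderiv : ∀ s ∈ Ico a t, HasDerivWithinAt y (y' s) (Ici s) s)
    (hineq : ∀ s ∈ Ico a t, y' s ≤ c * y s ^ (1 + γ) + b * y s) :
    bernoulliTransform γ (y t) ≤
      gronwallBound (bernoulliTransform γ (y a)) (-(b * γ)) c (t - a) := by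
  have hF : ∀ s ∈ Icc a t, HasDerivAt (bernoulliTransform γ) (y s ^ (-γ - 1)) (y s) :=
    fun s hs => hasDerivAt_bernoulliTransform hγ (hpos s hs)
  exact le_gronwallBound_of_hasDerivWithinAt_Ici (f := bernoulliTransform γ ∘ y) hat
    (fun s hs => (hF s hs).continuousAt.comp_continuousWithinAt (hcont s hs))
    (fun s hs => (hF s (Ico_subset_Icc_self hs)).comp_hasDerivWithinAt s (hderiv s hs))
    (fun s hs => rpow_mul_le_bernoulliTransform hγ (hpos s (Ico_subset_Icc_self hs)) (hineq s hs))

theorem bernoulli_denominator_pos_iff_lt_blowup_time {b c γ x t : ℝ} (hb : 0 < b) (hc : 0 < c)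
    (hγ : 0 < γ) (hx : 0 < x) :
    0 < 1 - (c / b) * x ^ γ * (Real.exp (b * γ * t) - 1) ↔
      t < (1 / (b * γ)) * Real.log (1 + b / (c * x ^ γ)) := by
  have hcoef : (c / b) * x ^ γ = (b / (c * x ^ γ))⁻¹ := by rw [inv_div, div_mul_eq_mul_div]
  rw [hcoef, sub_pos, inv_mul_lt_one₀ (by positivity), sub_lt_iff_lt_add',
    ← Real.lt_log_iff_exp_lt (by positivity), one_div_mul_eq_div, lt_div_iff₀' (by positivity)]

theorem stmt10_general {b c γ T : ℝ} (hb : b ≠ 0) (hγ : γ ≠ 0) {y y' : ℝ → ℝ}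
    (hpos : ∀ t ∈ Ico (0 : ℝ) T, 0 < y t) (hcont : ContinuousOn y (Ico (0 : ℝ) T))
    (hderiv : ∀ t ∈ Ico (0 : ℝ) T, HasDerivWithinAt y (y' t) (Ici t) t)
    (hineq : ∀ t ∈ Ico (0 : ℝ) T, y' t ≤ c * y t ^ (1 + γ) + b * y t) {t : ℝ}
    (ht : t ∈ Ico (0 : ℝ) T) (hq : 0 < 1 - (c / b) * y 0 ^ γ * (Real.exp (b * γ * t) - 1)) :
    y t ≤ Real.exp (b * t) * y 0 *
      (1 - (c / b) * y 0 ^ γ * (Real.exp (b * γ * t) - 1)) ^ (-(1 / γ)) := by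
  have hy₀ : 0 < y 0 := hpos 0 ⟨le_rfl, ht.1.trans_lt ht.2⟩
  have hIcc : Icc 0 t ⊆ Ico 0 T := Icc_subset_Ico_right ht.2
  have hIco : Ico 0 t ⊆ Ico 0 T := Ico_subset_Icc_self.trans hIcc
  have hF := bernoulliTransform_le_gronwallBound hγ ht.1 (fun s hs => hpos s (hIcc hs))
    (hcont.mono hIcc) (fun s hs => hderiv s (hIco hs)) (fun s hs => hineq s (hIco hs))
  rw [sub_zero, gronwallBound_bernoulliTransform hb hγ hy₀,
    ← bernoulliTransform_exp_mul_mul_rpow hγ hy₀ hq] at hF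
  exact ((strictMonoOn_bernoulliTransform hγ).le_iff_le (hpos t ht)
    (mem_Ioi.mpr (by positivity))).mp hF

/-- scalar differential inequality `y' ≤ c y^{1+γ} + b y` implies
`y(t) ≤ e^{bt} y(0) (1 − (c/b) y(0)^γ (e^{bγt} − 1))^{−1/γ}` for
`t < min(T, t*)`, where `t* = (1/(bγ)) log(1 + b/(c y(0)^γ))`. -/
theorem stmt10 (b c γ T : ℝ) (hb : 0 < b) (hc : 0 < c) (hγ : 0 < γ) (hT : 0 < T)
    (y y' : ℝ → ℝ)
    (hpos : ∀ t ∈ Set.Ico (0 : ℝ) T, 0 < y t)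
    (hderiv : ∀ t ∈ Set.Ico (0 : ℝ) T, HasDerivWithinAt y (y' t) (Set.Ico (0 : ℝ) T) t)
    (hineq : ∀ t ∈ Set.Ico (0 : ℝ) T, y' t ≤ c * y t ^ (1 + γ) + b * y t) :
    ∀ t ∈ Set.Ico (0 : ℝ)
        (min T ((1 / (b * γ)) * Real.log (1 + b / (c * y 0 ^ γ)))),
      0 < 1 - (c / b) * y 0 ^ γ * (Real.exp (b * γ * t) - 1) ∧
      y t ≤ Real.exp (b * t) * y 0 *
        (1 - (c / b) * y 0 ^ γ * (Real.exp (b * γ * t) - 1)) ^ (-(1 / γ)) := by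
  intro t ht
  obtain ⟨htT, ht_star⟩ := lt_min_iff.mp ht.2
  have hy₀ : 0 < y 0 := hpos 0 ⟨le_rfl, hT⟩
  have hq := (bernoulli_denominator_pos_iff_lt_blowup_time hb hc hγ hy₀).mpr ht_star
  exact ⟨hq, stmt10_general hb.ne' hγ.ne' hpos (fun s hs => (hderiv s hs).continuousWithinAt)
    (fun s hs => (hderiv s hs).mono_of_mem_nhdsWithin (Ico_mem_nhdsGE_of_mem hs)) hineq
    ⟨ht.1, htT⟩ hq⟩
end

section
/- Let s > 5/2, 0 < β ≤ 1/2, γ > 0 and c > 0. There exist constants c₁ > 0 and c₂ > 0 depending only on s and c such that the following holds. Suppose ζ : [0, T_ζ) → (0, ∞) is continuously differentiable, satisfies ζ'(t) = cγ·ζ(t)^(1+5/(2s)) + c·(βt)^(s−5/2)·ζ(t)² + c·(βt)²·γ²·ζ(t)^(1+5/s) + c·(βt)^(2s−3)·ζ(t)³ for all t ∈ [0, T_ζ), and T_ζ < ∞ is its maximal existence time, i.e. ζ(t) → ∞ as t → T_ζ from the left. Set Z = c₂ · min{γ^(5/(2s−5)), γ^(−1)} · ζ(0)^(−5/(2s)).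 If ζ(0) ≥ c₁ · β^(−4s/5) · min{γ^(2s/(2s−5)), γ^(−2s/5)}, then T_ζ > Z; if ζ(0) < c₁ · β^(−4s/5) · min{γ^(2s/(2s−5)), γ^(−2s/5)}, then T_ζ > min{Z, Z^(2/5)}. -/
/-!
Put `y = ζ 0`, `p = 5 / (2s)` and `Z = (1 + 32c)⁻¹ (max 1 γ)⁻¹ y ^ (-p)`. Each of the four terms of
the right-hand side has the form `c g (βt) ^ a ζ ^ (1 + pq)` with `q ≥ 1`,
`2/5 (1 + a) ≤ q ≤ 1 + a` and `g ≤ (max 1 γ) ^ q`. As long as `ζ ≤ 2y`, integrating such a term up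
to time `τ ≤ min Z (Z ^ (2/5))` yields at most `8 c y (max 1 γ · Z y ^ p) ^ q`, because
`τ ^ (1 + a) ≤ Z ^ q`; the exponent `2/5` is what makes this true when `Z ≥ 1`. The total increment
stays below `y`, so `ζ` cannot even double before that time.

The quantity `Z` of the theorem is no larger, as `min {γ ^ (5/(2s-5)), γ⁻¹} ≤ (max 1 γ)⁻¹`. With
`c₁ = c₂ ^ (2s/5)` the lower bound on `ζ 0` forces `Z ≤ 1`, hence `Z ≤ Z ^ (2/5)`.
-/

open Set Filter Topology

section Barrier

variable {f f' : ℝ → ℝ} {a b r M : ℝ}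

lemma hasDerivWithinAt_Ici_of_Ico {f₀ t : ℝ} (hf : HasDerivWithinAt f f₀ (Ico a b) t)
    (ht : t ∈ Ico a b) : HasDerivWithinAt f f₀ (Ici t) t :=
  hf.mono_of_mem_nhdsWithin <|
    mem_of_superset (Ico_mem_nhdsGE ht.2) (Ico_subset_Ico_left ht.1)

lemma le_of_deriv_lt_of_le (hr : 0 ≤ r) (hM : f a + r * (b - a) ≤ M)
    (hf : ContinuousOn f (Ico a b)) (hf' : ∀ t ∈ Ico a b, HasDerivWithinAt f (f' t) (Ici t) t)
    (hlt : ∀ t ∈ Ico a b, f t ≤ M → f' t < r) {t : ℝ} (ht : t ∈ Ico a b) : f t ≤ M := by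
  have line_le {x : ℝ} (hx : x < b) : f a + r * (x - a) ≤ M := by
    have : r * (x - a) ≤ r * (b - a) := by gcongr
    linarith
  have line_deriv (x : ℝ) : HasDerivAt (fun x ↦ f a + r * (x - a)) r x := by
    simpa using (((hasDerivAt_id x).sub_const a).const_mul r).const_add (f a)
  have le_line : f t ≤ f a + r * (t - a) :=
    image_le_of_deriv_right_lt_deriv_boundary
      (hf.mono (Icc_subset_Ico_right ht.2))
      (fun x hx ↦ hf' x ⟨hx.1, hx.2.trans ht.2⟩)
      (by simp) line_deriv
      (fun x hx hxline ↦
        hlt x ⟨hx.1, hx.2.trans ht.2⟩ (hxline.trans_le (line_le (hx.2.trans ht.2))))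
      (right_mem_Icc.2 ht.1)
  exact le_line.trans (line_le ht.2)

lemma not_tendsto_atTop_of_deriv_lt_of_le (hab : a < b) (hr : 0 ≤ r)
    (hM : f a + r * (b - a) ≤ M) (hf : ContinuousOn f (Ico a b))
    (hf' : ∀ t ∈ Ico a b, HasDerivWithinAt f (f' t) (Ici t) t)
    (hlt : ∀ t ∈ Ico a b, f t ≤ M → f' t < r) : ¬ Tendsto f (𝓝[<] b) atTop := fun h ↦
  not_isBoundedUnder_of_tendsto_atTop h <| isBoundedUnder_of_eventually_le <|
    mem_of_superset (Ico_mem_nhdsLT hab) fun _ ht ↦ le_of_deriv_lt_of_le hr hM hf hf' hlt ht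

end Barrier

section Powers

variable {τ Z θ : ℝ}

lemma rpow_le_rpow_of_le_min {e q : ℝ} (hτ : 0 ≤ τ) (hτZ : τ ≤ min Z (Z ^ θ)) (hq : 0 ≤ q)
    (hqe : q ≤ e) (heq : θ * e ≤ q) : τ ^ e ≤ Z ^ q := by
  obtain ⟨h, hθ⟩ := le_min_iff.1 hτZ
  have hZ : 0 ≤ Z := hτ.trans h
  have he : 0 ≤ e := hq.trans hqe
  rcases le_total Z 1 with hZ1 | hZ1
  · calc τ ^ e ≤ Z ^ e := Real.rpow_le_rpow hτ h he
      _ ≤ Z ^ q := Real.rpow_le_rpow_of_exponent_ge' hZ hZ1 hq hqe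
  · calc τ ^ e ≤ (Z ^ θ) ^ e := Real.rpow_le_rpow hτ hθ he
      _ = Z ^ (θ * e) := (Real.rpow_mul hZ θ e).symm
      _ ≤ Z ^ q := Real.rpow_le_rpow_of_exponent_le hZ1 heq

lemma lt_of_min_rpow_lt {T : ℝ} (hZ : 0 ≤ Z) (hZ1 : Z ≤ 1) (hθ : θ ≤ 1)
    (h : min Z (Z ^ θ) < T) : Z < T := by
  rwa [min_eq_left (Real.self_le_rpow_of_le_one hZ hZ1 hθ)] at h

lemma mul_monomial_le {G g k p q a u x y : ℝ} (hτZ : τ ≤ min Z (Z ^ θ)) (hG : 0 ≤ G)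
    (hk : G * Z * y ^ p ≤ k) (hk1 : k ≤ 1) (hu : 0 ≤ u) (huτ : u ≤ τ) (hx : 0 ≤ x)
    (hxy : x ≤ 2 * y) (hgG : g ≤ G ^ q) (hq : 1 ≤ q) (hqa : q ≤ 1 + a) (hθ : θ * (1 + a) ≤ q)
    (hpq : 0 ≤ p * q) (hpq2 : p * q ≤ 2) :
    τ * (g * u ^ a * x ^ (1 + p * q)) ≤ 8 * k * y := by
  have hy : 0 ≤ y := by linarith
  have ha : 0 ≤ a := by linarith
  have hτ : 0 ≤ τ := hu.trans huτ
  have hZ : 0 ≤ Z := hτ.trans (hτZ.trans (min_le_left _ _))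
  have htwo : (2 : ℝ) ^ (1 + p * q) ≤ 8 := by
    calc (2 : ℝ) ^ (1 + p * q) ≤ 2 ^ (3 : ℝ) :=
          Real.rpow_le_rpow_of_exponent_le one_le_two (by linarith)
      _ = 8 := by norm_num
  have htime : τ ^ (1 + a) ≤ Z ^ q := rpow_le_rpow_of_le_min hτ hτZ (by linarith) hqa hθ
  have hscale : G ^ q * Z ^ q * (y ^ p) ^ q ≤ k := by
    have h0 : 0 ≤ G * Z * y ^ p := by positivity
    calc G ^ q * Z ^ q * (y ^ p) ^ q = (G * Z * y ^ p) ^ q := by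
          rw [Real.mul_rpow (by positivity) (by positivity), Real.mul_rpow hG hZ]
      _ ≤ G * Z * y ^ p := Real.rpow_le_self_of_le_one h0 (hk.trans hk1) hq
      _ ≤ k := hk
  calc τ * (g * u ^ a * x ^ (1 + p * q))
      ≤ τ * (G ^ q * τ ^ a * (2 * y) ^ (1 + p * q)) := by gcongr
    _ = 2 ^ (1 + p * q) * (G ^ q * τ ^ (1 + a) * (y ^ p) ^ q) * y := by
        rw [Real.mul_rpow two_pos.le hy, Real.rpow_one_add' hy (by linarith),
          Real.rpow_one_add' hτ (by linarith), Real.rpow_mul hy]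
        ring
    _ ≤ 8 * (G ^ q * Z ^ q * (y ^ p) ^ q) * y := by gcongr
    _ ≤ 8 * k * y := by gcongr

lemma mul_rpow_mul_pow_le {G k p a u x y : ℝ} {n : ℕ} (hτZ : τ ≤ min Z (Z ^ θ)) (hG : 1 ≤ G)
    (hk : G * Z * y ^ p ≤ k) (hk1 : k ≤ 1) (hu : 0 ≤ u) (huτ : u ≤ τ) (hx : 0 ≤ x)
    (hxy : x ≤ 2 * y) (hp : 0 < p) (hpn : p ≤ n) (hn : n ≤ 2) (hna : n ≤ (1 + a) * p)
    (hθ : θ * (1 + a) * p ≤ n) :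
    τ * (u ^ a * x ^ (1 + n)) ≤ 8 * k * y := by
  have hpq : p * (n / p) = n := mul_div_cancel₀ _ hp.ne'
  have hq : 1 ≤ n / p := (one_le_div hp).2 hpn
  have hn2 : (n : ℝ) ≤ 2 := mod_cast hn
  have := mul_monomial_le (g := 1) (q := n / p) hτZ (zero_le_one.trans hG) hk hk1 hu huτ hx hxy
    (Real.one_le_rpow hG (by linarith)) hq ((div_le_iff₀ hp).2 hna) ((le_div_iff₀ hp).2 hθ)
    (hpq.symm ▸ n.cast_nonneg) (hpq.le.trans hn2)
  rw [hpq, one_mul] at this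
  exact_mod_cast this

end Powers

/-- The right-hand side of the differential equation for `ζ` at time `t` and value `x = ζ t`. -/
noncomputable def growthRate (s c β γ t x : ℝ) : ℝ :=
  c * γ * x ^ (1 + 5 / (2 * s)) + c * (β * t) ^ (s - 5 / 2) * x ^ 2
    + c * (β * t) ^ 2 * γ ^ 2 * x ^ (1 + 5 / s) + c * (β * t) ^ (2 * s - 3) * x ^ 3

lemma mul_growthRate_le {s c β γ τ Z k t x y : ℝ} (hs : 5 / 2 ≤ s) (hc : 0 ≤ c) (hβ : 0 ≤ β)
    (hβ1 : β ≤ 1) (hγ : 0 ≤ γ) (hτZ : τ ≤ min Z (Z ^ (2 / 5 : ℝ)))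
    (hk : max 1 γ * Z * y ^ (5 / (2 * s)) ≤ k) (hk1 : k ≤ 1) (ht : 0 ≤ t) (htτ : t ≤ τ)
    (hx : 0 ≤ x) (hxy : x ≤ 2 * y) : τ * growthRate s c β γ t x ≤ 32 * c * k * y := by
  have hu : 0 ≤ β * t := mul_nonneg hβ ht
  have huτ : β * t ≤ τ := (mul_le_of_le_one_left ht hβ1).trans htτ
  have hG1 : 1 ≤ max 1 γ := le_max_left 1 γ
  have hG : 0 ≤ max 1 γ := zero_le_one.trans hG1
  have hγG : γ ≤ max 1 γ := le_max_right 1 γ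
  have hp : 0 < 5 / (2 * s) := div_pos (by norm_num) (by linarith)
  have hp1 : 5 / (2 * s) ≤ 1 := (div_le_one (by linarith)).2 (by linarith)
  have hps : s * (5 / (2 * s)) = 5 / 2 := by field_simp
  have term₁ : τ * (γ * x ^ (1 + 5 / (2 * s))) ≤ 8 * k * y := by
    simpa using mul_monomial_le (g := γ) (q := 1) (a := 0) hτZ hG hk hk1 hu huτ hx hxy
      (by simp) le_rfl (by simp) (by norm_num) (by simpa using hp.le) (by linarith)
  have term₂ : τ * ((β * t) ^ (s - 5 / 2) * x ^ 2) ≤ 8 * k * y :=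
    mul_rpow_mul_pow_le (n := 1) hτZ hG1 hk hk1 hu huτ hx hxy hp (by simpa using hp1)
      one_le_two (by push_cast; linarith) (by push_cast; linarith)
  have term₃ : τ * ((β * t) ^ 2 * γ ^ 2 * x ^ (1 + 5 / s)) ≤ 8 * k * y := by
    have hexp : 5 / (2 * s) * 2 = 5 / s := by field_simp
    have := mul_monomial_le (g := γ ^ 2) (q := 2) (a := 2) hτZ hG hk hk1 hu huτ hx hxy
      (by rw [Real.rpow_two]; gcongr) one_le_two (by norm_num) (by norm_num)
      (by positivity) (by linarith)
    rwa [hexp, Real.rpow_two, mul_comm (γ ^ 2)] at this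
  have term₄ : τ * ((β * t) ^ (2 * s - 3) * x ^ 3) ≤ 8 * k * y :=
    mul_rpow_mul_pow_le (n := 2) hτZ hG1 hk hk1 hu huτ hx hxy hp (by push_cast; linarith)
      le_rfl (by push_cast; linarith) (by push_cast; linarith)
  calc τ * growthRate s c β γ t x
      = c * (τ * (γ * x ^ (1 + 5 / (2 * s))) + τ * ((β * t) ^ (s - 5 / 2) * x ^ 2)
          + τ * ((β * t) ^ 2 * γ ^ 2 * x ^ (1 + 5 / s))
          + τ * ((β * t) ^ (2 * s - 3) * x ^ 3)) := by rw [growthRate]; ring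
    _ ≤ c * (8 * k * y + 8 * k * y + 8 * k * y + 8 * k * y) := by gcongr
    _ = 32 * c * k * y := by ring

section LifespanScale

/-- The time scale `μ y ^ (-5/(2s))` on which a solution starting at `y` may double. The
quantity `Z` of the theorem is the case `μ = c₂ min {γ ^ (5/(2s-5)), γ⁻¹}`, `y = ζ 0`; the factor
`μ` is kept free so that the larger scale with `(max 1 γ)⁻¹` is covered as well. -/
noncomputable def lifespanScale (s μ y : ℝ) : ℝ :=
  μ * y ^ (-(5 / (2 * s)))

variable {s μ ν y : ℝ}

lemma lifespanScale_pos (hμ : 0 < μ) (hy : 0 < y) : 0 < lifespanScale s μ y :=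
  mul_pos hμ (Real.rpow_pos_of_pos hy _)

lemma lifespanScale_mul_rpow (hy : 0 < y) : lifespanScale s μ y * y ^ (5 / (2 * s)) = μ := by
  rw [lifespanScale, mul_assoc, ← Real.rpow_add hy, neg_add_cancel, Real.rpow_zero, mul_one]

lemma lifespanScale_le_one_iff (hy : 0 < y) :
    lifespanScale s μ y ≤ 1 ↔ μ ≤ y ^ (5 / (2 * s)) := by
  rw [← mul_le_iff_le_one_left (Real.rpow_pos_of_pos hy (5 / (2 * s))), lifespanScale_mul_rpow hy]

lemma min_lifespanScale_rpow_mono {θ : ℝ} (hθ : 0 ≤ θ) (hμ : 0 ≤ μ) (hμν : μ ≤ ν) (hy : 0 ≤ y) :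
    min (lifespanScale s μ y) (lifespanScale s μ y ^ θ) ≤
      min (lifespanScale s ν y) (lifespanScale s ν y ^ θ) := by
  unfold lifespanScale
  gcongr

end LifespanScale

section Thresholds

variable {s γ : ℝ}

lemma min_rpow_le_inv_max (hs : 5 / 2 < s) (hγ : 0 ≤ γ) :
    min (γ ^ (5 / (2 * s - 5))) (γ ^ (-1 : ℝ)) ≤ (max 1 γ)⁻¹ := by
  have hs5 : 0 < 2 * s - 5 := by linarith
  rcases le_total γ 1 with h | h
  · rw [max_eq_left h, inv_one]
    exact (min_le_left _ _).trans (Real.rpow_le_one hγ h (by positivity))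
  · rw [max_eq_right h, ← Real.rpow_neg_one]
    exact min_le_right _ _

lemma min_rpow_rpow (hs : 5 / 2 < s) (hγ : 0 ≤ γ) :
    min (γ ^ (2 * s / (2 * s - 5))) (γ ^ (-(2 * s) / 5)) ^ (5 / (2 * s)) =
      min (γ ^ (5 / (2 * s - 5))) (γ ^ (-1 : ℝ)) := by
  have hs0 : s ≠ 0 := by linarith
  have hs5 : 2 * s - 5 ≠ 0 := by linarith
  have hp : 0 ≤ 5 / (2 * s) := div_nonneg (by norm_num) (by linarith)
  rw [(Real.monotoneOn_rpow_Ici_of_exponent_nonneg hp).map_min (Real.rpow_nonneg hγ _)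
    (Real.rpow_nonneg hγ _), ← Real.rpow_mul hγ, ← Real.rpow_mul hγ]
  congr 2 <;> field_simp

lemma lifespanScale_le_one_of_threshold_le {k β y : ℝ} (hs : 5 / 2 < s) (hk : 0 < k)
    (hβ : 0 < β) (hβ1 : β ≤ 1) (hγ : 0 < γ) (hy : 0 < y)
    (h : k ^ (2 * s / 5) * β ^ (-(4 * s / 5)) *
      min (γ ^ (2 * s / (2 * s - 5))) (γ ^ (-(2 * s) / 5)) ≤ y) :
    lifespanScale s (k * min (γ ^ (5 / (2 * s - 5))) (γ ^ (-1 : ℝ))) y ≤ 1 := by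
  rw [lifespanScale_le_one_iff hy, ← min_rpow_rpow hs hγ.le]
  set m := min (γ ^ (2 * s / (2 * s - 5))) (γ ^ (-(2 * s) / 5))
  have : 0 < s := by linarith
  have hm : 0 < m := by positivity
  have hβpow : 1 ≤ β ^ (-(4 * s / 5)) :=
    Real.one_le_rpow_of_pos_of_le_one_of_nonpos hβ hβ1 (by linarith)
  have hkm : k ^ (2 * s / 5) * m ≤ y := by
    refine le_trans ?_ h
    gcongr
    exact le_mul_of_one_le_right (by positivity) hβpow
  calc k * m ^ (5 / (2 * s)) = (k ^ (2 * s / 5) * m) ^ (5 / (2 * s)) := by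
        rw [Real.mul_rpow (by positivity) hm.le, ← Real.rpow_mul hk.le,
          show 2 * s / 5 * (5 / (2 * s)) = 1 by field_simp, Real.rpow_one]
    _ ≤ y ^ (5 / (2 * s)) := by gcongr

end Thresholds

theorem stmt14_general {s c β γ T : ℝ} {ζ ζ' : ℝ → ℝ} (hs : 5 / 2 ≤ s) (hc : 0 ≤ c)
    (hβ : 0 ≤ β) (hβ1 : β ≤ 1) (hγ : 0 ≤ γ) (hT : 0 < T) (hpos : ∀ t ∈ Ico 0 T, 0 < ζ t)
    (hderiv : ∀ t ∈ Ico 0 T, HasDerivWithinAt ζ (ζ' t) (Ico 0 T) t)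
    (hgrowth : ∀ t ∈ Ico 0 T, ζ' t ≤ growthRate s c β γ t (ζ t))
    (hblowup : Tendsto ζ (𝓝[<] T) atTop) :
    min (lifespanScale s ((1 + 32 * c)⁻¹ * (max 1 γ)⁻¹) (ζ 0))
      (lifespanScale s ((1 + 32 * c)⁻¹ * (max 1 γ)⁻¹) (ζ 0) ^ (2 / 5 : ℝ)) < T := by
  have hζ0 : 0 < ζ 0 := hpos 0 (left_mem_Ico.2 hT)
  have : 0 < max 1 γ := zero_lt_one.trans_le (le_max_left 1 γ)
  set Z := lifespanScale s ((1 + 32 * c)⁻¹ * (max 1 γ)⁻¹) (ζ 0) with hZdef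
  have hZ : 0 < Z := lifespanScale_pos (by positivity) hζ0
  have hscale : max 1 γ * Z * ζ 0 ^ (5 / (2 * s)) = (1 + 32 * c)⁻¹ := by
    rw [mul_assoc, hZdef, lifespanScale_mul_rpow hζ0]
    field_simp
  set τ := min Z (Z ^ (2 / 5 : ℝ))
  have hτ : 0 < τ := lt_min hZ (by positivity)
  have hincr : 32 * c * (1 + 32 * c)⁻¹ * ζ 0 < ζ 0 := by
    refine mul_lt_of_lt_one_left hζ0 ?_
    rw [← div_eq_mul_inv, div_lt_one (by positivity)]
    linarith
  by_contra! hTτ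
  have hslow (t : ℝ) (ht : t ∈ Ico 0 T) (hle : ζ t ≤ 2 * ζ 0) : ζ' t < ζ 0 / τ := by
    rw [lt_div_iff₀' hτ]
    calc τ * ζ' t ≤ τ * growthRate s c β γ t (ζ t) := by gcongr; exact hgrowth t ht
      _ ≤ 32 * c * (1 + 32 * c)⁻¹ * ζ 0 :=
          mul_growthRate_le hs hc hβ hβ1 hγ le_rfl hscale.le (inv_le_one_of_one_le₀ (by linarith))
            ht.1 (ht.2.le.trans hTτ) (hpos t ht).le hle
      _ < ζ 0 := hincr
  have hdouble : ζ 0 + ζ 0 / τ * (T - 0) ≤ 2 * ζ 0 := by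
    have : ζ 0 / τ * T ≤ ζ 0 / τ * τ := by gcongr
    rw [div_mul_cancel₀ _ hτ.ne'] at this
    linarith
  exact not_tendsto_atTop_of_deriv_lt_of_le hT (by positivity) hdouble
    (fun t ht ↦ (hderiv t ht).continuousWithinAt)
    (fun t ht ↦ hasDerivWithinAt_Ici_of_Ico (hderiv t ht) ht) hslow hblowup

/-- lower bound on the blow-up time of the non-autonomous ODE
`ζ' = cγ ζ^{1+5/(2s)} + c(βt)^{s−5/2} ζ² + c(βt)² γ² ζ^{1+5/s} + c(βt)^{2s−3} ζ³`
for `s > 5/2`, with constants `c₁, c₂` depending only on `s` and `c`. -/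
theorem stmt14 (s c : ℝ) (hs : 5 / 2 < s) (hc : 0 < c) :
    ∃ c₁ : ℝ, 0 < c₁ ∧ ∃ c₂ : ℝ, 0 < c₂ ∧
      ∀ β γ Tζ : ℝ, 0 < β → β ≤ 1 / 2 → 0 < γ → 0 < Tζ →
      ∀ ζ ζ' : ℝ → ℝ,
        (∀ t ∈ Set.Ico (0 : ℝ) Tζ, 0 < ζ t) →
        (∀ t ∈ Set.Ico (0 : ℝ) Tζ, HasDerivWithinAt ζ (ζ' t) (Set.Ico (0 : ℝ) Tζ) t) →
        (∀ t ∈ Set.Ico (0 : ℝ) Tζ, ContinuousWithinAt ζ' (Set.Ico (0 : ℝ) Tζ) t) →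
        (∀ t ∈ Set.Ico (0 : ℝ) Tζ,
          ζ' t = c * γ * ζ t ^ (1 + 5 / (2 * s))
            + c * (β * t) ^ (s - 5 / 2) * ζ t ^ 2
            + c * (β * t) ^ 2 * γ ^ 2 * ζ t ^ (1 + 5 / s)
            + c * (β * t) ^ (2 * s - 3) * ζ t ^ 3) →
        Filter.Tendsto ζ (nhdsWithin Tζ (Set.Iio Tζ)) Filter.atTop →
        ((c₁ * β ^ (-(4 * s / 5)) * min (γ ^ (2 * s / (2 * s - 5))) (γ ^ (-(2 * s) / 5))
            ≤ ζ 0 →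
          c₂ * min (γ ^ (5 / (2 * s - 5))) (γ ^ (-1 : ℝ)) * ζ 0 ^ (-(5 / (2 * s))) < Tζ) ∧
         (ζ 0 <
            c₁ * β ^ (-(4 * s / 5)) * min (γ ^ (2 * s / (2 * s - 5))) (γ ^ (-(2 * s) / 5)) →
          min (c₂ * min (γ ^ (5 / (2 * s - 5))) (γ ^ (-1 : ℝ)) * ζ 0 ^ (-(5 / (2 * s))))
              ((c₂ * min (γ ^ (5 / (2 * s - 5))) (γ ^ (-1 : ℝ)) * ζ 0 ^ (-(5 / (2 * s))))
                ^ ((2 : ℝ) / 5)) < Tζ)) := by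
  refine ⟨(1 + 32 * c)⁻¹ ^ (2 * s / 5), by positivity, (1 + 32 * c)⁻¹, by positivity,
    fun β γ T hβ hβ1 hγ hT ζ ζ' hpos hderiv _ hode hblowup ↦ ?_⟩
  have hβ1 : β ≤ 1 := hβ1.trans (by norm_num)
  have hζ0 : 0 < ζ 0 := hpos 0 (left_mem_Ico.2 hT)
  have hfactor := mul_le_mul_of_nonneg_left (min_rpow_le_inv_max hs hγ.le)
    (show 0 ≤ (1 + 32 * c)⁻¹ by positivity)
  have hlt := (min_lifespanScale_rpow_mono (s := s) (θ := 2 / 5) (by norm_num) (by positivity)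
    hfactor hζ0.le).trans_lt <|
    stmt14_general hs.le hc.le hβ.le hβ1 hγ.le hT hpos hderiv (fun t ht ↦ (hode t ht).le) hblowup
  exact ⟨fun h ↦ lt_of_min_rpow_lt (lifespanScale_pos (by positivity) hζ0).le
    (lifespanScale_le_one_of_threshold_le hs (by positivity) hβ hβ1 hγ hζ0 h) (by norm_num) hlt,
    fun _ ↦ hlt⟩
end
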